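/- Let d ≥ 2 and let Ω, ρ, h_{λ,ℓ} be as in the context (in particular ∂Ω has everywhere nonvanishing Gaussian curvature). Let K_{λ,ℓ} := F^{−1}[h_{λ,ℓ}∘ρ]. Then there is a constant C such that for all integers ℓ ≥ 0: ‖K_{λ,ℓ}‖_{L^∞(ℝ^d)} ≤ C · 2^{−ℓ(λ + (d+1)/2)}. -/

import Mathlib

open MeasureTheory Filter
open scoped ENNReal NNReal RealInnerProductSpace BigOperators Topology

noncomputable section

/-- `ℝ^d` as a Euclidean space. -/
abbrev Euc (d : ℕ) : Type := EuclideanSpace ℝ (Fin d)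

/-- The geometric setup: `Ω` is a bounded open convex subset of `ℝ^d` containing the origin,
`ρ` is its Minkowski functional, which is assumed to be smooth away from the origin and
positive away from the origin. -/
structure IsMinkowskiGauge (d : ℕ) (Ω : Set (Euc d)) (ρ : Euc d → ℝ) : Prop where
  isOpen : IsOpen Ω
  convex : Convex ℝ Ω
  isBounded : Bornology.IsBounded Ω
  zero_mem : (0 : Euc d) ∈ Ω
  eq_gauge : ρ = gauge Ω
  smooth : ContDiffOn ℝ (⊤ : ℕ∞) ρ {(0 : Euc d)}ᶜ
  pos : ∀ ξ : Euc d, ξ ≠ 0 → 0 < ρ ξ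

/-- Everywhere nonvanishing Gaussian curvature of `∂Ω = {ρ = 1}`: for every `ξ ≠ 0`
the Hessian of `ρ` at `ξ` has rank `d - 1`. -/
def HasNonvanishingCurvature (d : ℕ) (ρ : Euc d → ℝ) : Prop :=
  ∀ ξ : Euc d, ξ ≠ 0 →
    LinearMap.rank ((fderiv ℝ (fderiv ℝ ρ) ξ : Euc d →L[ℝ] (Euc d →L[ℝ] ℝ)) :
      Euc d →ₗ[ℝ] (Euc d →L[ℝ] ℝ)) = (d - 1 : ℕ)

/-- The Fourier transform `f̂(ξ) = ∫ f(y) e^{−i⟨y,ξ⟩} dy` on `ℝ^d`. -/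
def FTd {d : ℕ} (f : Euc d → ℂ) (ξ : Euc d) : ℂ :=
  ∫ y : Euc d, f y * Complex.exp (-(Complex.I * (⟪y, ξ⟫ : ℂ)))

/-- The Riesz mean `R^λ_{a,t} f(x) = (2π)^{-d} ∫ (1 - ρ(ξ)^a/t^a)_+^λ f̂(ξ) e^{i⟨x,ξ⟩} dξ`. -/
def RieszMean {d : ℕ} (ρ : Euc d → ℝ) (a lam t : ℝ) (f : Euc d → ℂ) (x : Euc d) : ℂ :=
  (((2 * Real.pi) ^ d)⁻¹ : ℝ) •
    ∫ ξ : Euc d, ((max (1 - ρ ξ ^ a / t ^ a) 0) ^ lam : ℝ) •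
      (FTd f ξ * Complex.exp (Complex.I * (⟪x, ξ⟫ : ℂ)))

/-- The critical index `λ(p) = d(1/p - 1/2) - 1/2`. -/
def criticalIndex (d : ℕ) (p : ℝ) : ℝ := (d : ℝ) * (1 / p - 1 / 2) - 1 / 2

/-- One-dimensional Fourier transform `φ̂(ϱ) = ∫ φ(s) e^{-isϱ} ds`. -/
def FT1 (φ : ℝ → ℂ) (ϱ : ℝ) : ℂ :=
  ∫ s : ℝ, φ s * Complex.exp (-(Complex.I * (s : ℂ) * (ϱ : ℂ)))

/-- One-dimensional Fourier transform of a real-valued function. -/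
def FT1R (Φ : ℝ → ℝ) : ℝ → ℂ := FT1 (fun s => (Φ s : ℂ))

/-- The pieces `h_{λ,ℓ}` of the decomposition of the Riesz multiplier. -/
def hfun (χ Φ Ψ : ℝ → ℝ) (lam : ℝ) : ℕ → ℝ → ℂ
  | 0 => fun ϱ => ((2 * Real.pi)⁻¹ * χ ϱ : ℝ) •
      ∫ u : ℝ, ((max (1 - u) 0) ^ lam : ℝ) • FT1R Φ (ϱ - u)
  | (ℓ + 1) => fun ϱ => ((2 * Real.pi)⁻¹ * χ ϱ : ℝ) •
      ∫ u : ℝ, ((max (1 - u) 0) ^ lam : ℝ) •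
        (((2 : ℝ) ^ ℓ) • FT1R Ψ ((2 : ℝ) ^ ℓ * (ϱ - u)))

/-- The data entering the construction of `h_{λ,ℓ}`: a cutoff `χ ∈ C_c^∞((1/2,2))`, an even
`Φ = Φ∘ ∈ C_c^∞(ℝ)` with `Φ∘ = 1` on `[-1/2,1/2]`, `supp Φ∘ ⊆ [-1,1]`, satisfying the moment
cancellation conditions, and `Ψ(x) = Φ∘(x/2) - Φ∘(x)`. -/
structure HData (lam : ℝ) (N0 : ℕ) (χ Φ Ψ : ℝ → ℝ) : Prop where
  hχsm : ContDiff ℝ (⊤ : ℕ∞) χ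
  hχsupp : Function.support χ ⊆ Set.Ioo (1/2 : ℝ) 2
  hΦsm : ContDiff ℝ (⊤ : ℕ∞) Φ
  hΦeven : ∀ s, Φ (-s) = Φ s
  hΦone : ∀ s : ℝ, |s| ≤ 1/2 → Φ s = 1
  hΦzero : ∀ s : ℝ, 1 ≤ |s| → Φ s = 0
  hΦcanc : ∀ j : ℕ, j ≤ N0 → (j : ℝ) ≠ lam →
    (∫ ϱ in Set.Ioi (0 : ℝ), ((ϱ ^ lam : ℝ) : ℂ) * iteratedDeriv j (FT1R Φ) ϱ) = 0
  hΨ : Ψ = fun x => Φ (x / 2) - Φ x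

/-- Inverse Fourier transform on `ℝ^d`. -/
def invFTd {d : ℕ} (m : Euc d → ℂ) (x : Euc d) : ℂ :=
  (((2 * Real.pi) ^ d)⁻¹ : ℝ) •
    ∫ ξ : Euc d, m ξ * Complex.exp (Complex.I * (⟪x, ξ⟫ : ℂ))

/-- The Fourier multiplier operator `m(D) f = (𝓕⁻¹ m) * f`. -/
def mulOp {d : ℕ} (m : Euc d → ℂ) (f : Euc d → ℂ) (x : Euc d) : ℂ :=
  ∫ y : Euc d, invFTd m (x - y) * f y

/-- The Hardy–Littlewood maximal function. -/
def HLMaximal {d : ℕ} (w : Euc d → ℝ) (x : Euc d) : ℝ≥0∞ :=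
  ⨆ r : {r : ℝ // 0 < r},
    (volume (Metric.ball x r.1))⁻¹ * ∫⁻ y in Metric.ball x r.1, ENNReal.ofReal (w y)

/-- `w` is an `A₁` weight. -/
structure IsA1Weight {d : ℕ} (w : Euc d → ℝ) : Prop where
  nonneg : ∀ x, 0 ≤ w x
  locInt : LocallyIntegrable w volume
  ne_zero : ¬ (w =ᵐ[(volume : Measure (Euc d))] (0 : Euc d → ℝ))
  maximal_le : ∃ C : ℝ, ∀ᵐ x ∂(volume : Measure (Euc d)),
    HLMaximal w x ≤ ENNReal.ofReal (C * w x)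

/-- `w` satisfies a reverse Hölder inequality with exponent `σ`. -/
def IsRH {d : ℕ} (σ : ℝ) (w : Euc d → ℝ) : Prop :=
  ∃ C : ℝ, ∀ (x : Euc d) (r : ℝ), 0 < r →
    ((volume (Metric.ball x r))⁻¹ *
        ∫⁻ y in Metric.ball x r, ENNReal.ofReal (w y) ^ σ) ^ (1 / σ) ≤
      ENNReal.ofReal C *
        ((volume (Metric.ball x r))⁻¹ * ∫⁻ y in Metric.ball x r, ENNReal.ofReal (w y))

/-- The weighted `L^p(w)` (quasi-)norm. -/
def wLpNorm {d : ℕ} (p : ℝ) (w : Euc d → ℝ) (g : Euc d → ℂ) : ℝ≥0∞ :=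
  (∫⁻ x, (‖g x‖₊ : ℝ≥0∞) ^ p * ENNReal.ofReal (w x)) ^ (1 / p)

/-- The weighted weak `L^{p,∞}(w)` (quasi-)norm. -/
def wWeakNorm {d : ℕ} (p : ℝ) (w : Euc d → ℝ) (g : Euc d → ℂ) : ℝ≥0∞ :=
  ⨆ α : {α : ℝ // 0 < α},
    ENNReal.ofReal α.1 *
      (∫⁻ x in {x : Euc d | α.1 < ‖g x‖}, ENNReal.ofReal (w x)) ^ (1 / p)

/-- A (half-open, axes-parallel) cube `x + [0,s)^d` in `ℝ^d`. -/
def IsCube {d : ℕ} (Q : Set (Euc d)) : Prop :=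
  ∃ (x : Euc d) (s : ℝ), 0 < s ∧ Q = {y : Euc d | ∀ i, y i ∈ Set.Ico (x i) (x i + s)}

/-- The average `⟨f⟩_{Q,p} = (|Q|⁻¹ ∫_Q |f|^p)^{1/p}`. -/
def cubeAvg {d : ℕ} (p : ℝ) (Q : Set (Euc d)) (f : Euc d → ℂ) : ℝ≥0∞ :=
  ((volume Q)⁻¹ * ∫⁻ x in Q, (‖f x‖₊ : ℝ≥0∞) ^ p) ^ (1 / p)

/-- A `γ`-sparse (finite) family of cubes. -/
def IsSparseFamily {d : ℕ} (γ : ℝ) (𝔖 : Finset (Set (Euc d))) : Prop :=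
  (∀ Q ∈ 𝔖, IsCube Q) ∧
  ∃ E : Set (Euc d) → Set (Euc d),
    (∀ Q ∈ 𝔖, MeasurableSet (E Q) ∧ E Q ⊆ Q ∧
      ENNReal.ofReal γ * volume Q ≤ volume (E Q)) ∧
    (𝔖 : Set (Set (Euc d))).Pairwise fun Q Q' => Disjoint (E Q) (E Q')

/-- The maximal sparse form `Λ*_{p,q}(f₁,f₂)` (supremum over `1/2`-sparse families). -/
def sparseFormMax {d : ℕ} (p q : ℝ) (f₁ f₂ : Euc d → ℂ) : ℝ≥0∞ :=
  ⨆ 𝔖 : {𝔖 : Finset (Set (Euc d)) // IsSparseFamily (1/2) 𝔖},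
    ∑ Q ∈ 𝔖.1, volume Q * cubeAvg p Q f₁ * cubeAvg q Q f₂

/-- The sparse bound `T ∈ Sp(p,q)`. -/
def SparseBound {d : ℕ} (p q : ℝ) (T : (Euc d → ℂ) → Euc d → ℂ) : Prop :=
  ∃ C : ℝ, ∀ f₁ f₂ : Euc d → ℂ,
    ContDiff ℝ (⊤ : ℕ∞) f₁ → HasCompactSupport f₁ →
    ContDiff ℝ (⊤ : ℕ∞) f₂ → HasCompactSupport f₂ →
    ENNReal.ofReal ‖∫ x, T f₁ x * f₂ x‖ ≤ ENNReal.ofReal C * sparseFormMax p q f₁ f₂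

/-- The exponent `r_*(p, p∘, r∘)`. -/
def rStar (d : ℕ) (p p0 r0 : ℝ) : ℝ :=
  if p ≤ 2 * ((d : ℝ) + 1) / ((d : ℝ) + 3) then
    (((d : ℝ) + 1) / ((d : ℝ) - 1) * (1 - 1 / p))⁻¹
  else
    ((1 / r0 * (((d : ℝ) + 3) / (2 * ((d : ℝ) + 1)) - 1 / p) +
        1 / 2 * (1 / p - 1 / p0)) /
      (((d : ℝ) + 3) / (2 * ((d : ℝ) + 1)) - 1 / p0))⁻¹

/-- The exponent `q_*(p, p∘, r∘)`, the conjugate of `r_*(p, p∘, r∘)`. -/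
def qStar (d : ℕ) (p p0 r0 : ℝ) : ℝ := (1 - 1 / rStar d p p0 r0)⁻¹

/-- The trapezoid `∏_d(λ)` with corners `P₁, P₂, P₃, P₄`. -/
def trapez (d : ℕ) (lam : ℝ) : Set (ℝ × ℝ) :=
  convexHull ℝ
    {((2*lam + (d:ℝ) + 1)/(2*(d:ℝ)), ((d:ℝ) - 2*lam - 1)/(2*(d:ℝ))),
     ((2*lam + (d:ℝ) + 1)/(2*(d:ℝ)),
       ((d:ℝ) - 1)/(2*(d:ℝ)) + lam*((d:ℝ) + 1)/((d:ℝ)*((d:ℝ) - 1))),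
     (((d:ℝ) - 1)/(2*(d:ℝ)) + lam*((d:ℝ) + 1)/((d:ℝ)*((d:ℝ) - 1)),
       (2*lam + (d:ℝ) + 1)/(2*(d:ℝ))),
     (((d:ℝ) - 2*lam - 1)/(2*(d:ℝ)), (2*lam + (d:ℝ) + 1)/(2*(d:ℝ)))}

/-- A dyadic cube `2^k(m + [0,1)^d)`, recorded by its generation `k` and position `m`. -/
structure DyadicCube (d : ℕ) where
  k : ℤ
  m : Fin d → ℤ
deriving DecidableEq

/-- The subset of `ℝ^d` corresponding to a dyadic cube. -/
def DyadicCube.set {d : ℕ} (Q : DyadicCube d) : Set (Euc d) :=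
  {x : Euc d | ∀ i, x i ∈ Set.Ico ((2:ℝ) ^ Q.k * (Q.m i : ℝ)) ((2:ℝ) ^ Q.k * ((Q.m i : ℝ) + 1))}

/-- `μ(𝔔) = Σ_{Q ∈ 𝔔} |Q|`. -/
def dyadicMeasure {d : ℕ} (𝔔 : Finset (DyadicCube d)) : ℝ≥0∞ :=
  ∑ Q ∈ 𝔔, volume Q.set

/-- The class `𝒴_M` of normalized bump functions. -/
def MemYM (M : ℕ) (χ : ℝ → ℂ) : Prop :=
  ContDiff ℝ (M : ℕ∞) χ ∧ Function.support χ ⊆ Set.Ioo (1/2 : ℝ) 2 ∧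
    ∑ ν ∈ Finset.range (M + 1), (⨆ s : ℝ, ‖iteratedDeriv ν χ s‖) ≤ 1

/-- The function `Σ_{j ≥ 1} 2^{j(d+1)/2} m_j(D)[Σ_{Q ∈ 𝔇_j} f_Q]` appearing in `VBR(p,r)`,
where `m_j(ξ) = χ_j(2^j(1 - ρ(ξ)))`. -/
def vbrSum {d : ℕ} (ρ : Euc d → ℝ) (χ : ℕ → ℝ → ℂ) (𝔉 : Finset (DyadicCube d))
    (f : DyadicCube d → Euc d → ℂ) (x : Euc d) : ℂ :=
  Finset.sum ((𝔉.image (fun Q => Q.k)).filter (fun j => 1 ≤ j)) fun (j : ℤ) =>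
    ((2:ℝ) ^ ((j : ℝ) * ((d : ℝ) + 1) / 2)) •
      mulOp (fun ξ => χ j.toNat ((2:ℝ) ^ j * (1 - ρ ξ)))
        (fun y => ∑ Q ∈ 𝔉.filter (fun Q' => Q'.k = j), f Q y) x

/-- The statement `VBR(p,r)`. -/
def VBR (d : ℕ) (ρ : Euc d → ℝ) (p r : ℝ) : Prop :=
  ∃ (M : ℕ) (C : ℝ), 1 ≤ M ∧
    ∀ χ : ℕ → ℝ → ℂ, (∀ j : ℕ, 1 ≤ j → MemYM M (χ j)) →
    ∀ (𝔉 : Finset (DyadicCube d)) (f : DyadicCube d → Euc d → ℂ),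
      (∀ Q ∈ 𝔉, Function.support (f Q) ⊆ closure Q.set) →
      eLpNorm (vbrSum ρ χ 𝔉 f) (ENNReal.ofReal r) volume ≤
        ENNReal.ofReal C *
          (∑ Q ∈ 𝔉, volume Q.set * eLpNorm (f Q) (ENNReal.ofReal p) volume ^ r) ^ (1 / r)

/-- `Hyp(p∘, r∘)`: `VBR(p,r)` holds for all `p ∈ [2(d+1)/(d+3), p∘)`
and all `r ∈ [p, r_*(p,p∘,r∘))`. -/
def Hyp (d : ℕ) (ρ : Euc d → ℝ) (p0 r0 : ℝ) : Prop :=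
  ∀ p r : ℝ, 2 * ((d : ℝ) + 1) / ((d : ℝ) + 3) ≤ p → p < p0 →
    p ≤ r → r < rStar d p p0 r0 → VBR d ρ p r

/-- The operator `A_{λ,ℓ} = 2^{ℓ(λ + (d+1)/2)} h_{λ,ℓ}(ρ(D))`. -/
def Aop {d : ℕ} (ρ : Euc d → ℝ) (h : ℕ → ℝ → ℂ) (lam : ℝ) (ℓ : ℕ)
    (f : Euc d → ℂ) (x : Euc d) : ℂ :=
  ((2:ℝ) ^ ((ℓ : ℝ) * (lam + ((d : ℝ) + 1) / 2))) • mulOp (fun ξ => h ℓ (ρ ξ)) f x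

/-- `𝒜_{s,𝔔} F = Σ_{ℓ ≥ s} Σ_{Q ∈ 𝔔_{ℓ-s}} A_{λ,ℓ}[F_Q 1_Q]`. -/
def AopSum {d : ℕ} (ρ : Euc d → ℝ) (h : ℕ → ℝ → ℂ) (lam : ℝ) (s : ℕ)
    (𝔔 : Finset (DyadicCube d)) (F : DyadicCube d → Euc d → ℂ) (x : Euc d) : ℂ :=
  ∑ Q ∈ 𝔔, Aop ρ h lam (Q.k.toNat + s) (Q.set.indicator (F Q)) x

/-- `Ξ_{s,𝔔}[F,β] = Σ_{ℓ ≥ s} Σ_{Q ∈ 𝔔_{ℓ-s}} β(Q) A_{λ,ℓ}[F_Q 1_Q]`. -/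
def XiSum {d : ℕ} (ρ : Euc d → ℝ) (h : ℕ → ℝ → ℂ) (lam : ℝ) (s : ℕ)
    (𝔔 : Finset (DyadicCube d)) (F : DyadicCube d → Euc d → ℂ)
    (β : DyadicCube d → ℂ) (x : Euc d) : ℂ :=
  ∑ Q ∈ 𝔔, β Q * Aop ρ h lam (Q.k.toNat + s) (Q.set.indicator (F Q)) x

/-- `‖F‖_{ℓ^∞(L^p)} = sup_{Q ∈ 𝔔} ‖F_Q‖_{L^p}`. -/
def supLp {d : ℕ} (p : ℝ) (𝔔 : Finset (DyadicCube d))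
    (F : DyadicCube d → Euc d → ℂ) : ℝ≥0∞ :=
  ⨆ Q ∈ 𝔔, eLpNorm (F Q) (ENNReal.ofReal p) volume

/-- `‖β‖_{ℓ^{r,1}(μ)} = ∫_0^∞ μ({Q ∈ 𝔔 : |β(Q)| > α})^{1/r} dα`. -/
def lorentzNorm {d : ℕ} (r : ℝ) (𝔔 : Finset (DyadicCube d))
    (β : DyadicCube d → ℂ) : ℝ≥0∞ :=
  ∫⁻ α in Set.Ioi (0:ℝ),
    (∑ Q ∈ 𝔔, if α < ‖β Q‖ then volume Q.set else 0) ^ (1 / r)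
section Osc

variable {E : Type} [NormedAddCommGroup E] [NormedSpace ℝ E]

/-- Uniform boundedness (over an index) of `k` directional derivatives. -/
def UB {ι : Type} (U : ι → Set E) (e : ι → E) : ℕ → (ι → E → ℂ) → Prop
  | 0, b => ∃ C : ℝ, ∀ i, ∀ p ∈ U i, ‖b i p‖ ≤ C
  | (k + 1), b => (∃ C : ℝ, ∀ i, ∀ p ∈ U i, ‖b i p‖ ≤ C) ∧
      (∀ i, ∀ p ∈ U i, DifferentiableAt ℝ (b i) p) ∧
      UB U e k (fun i p => fderiv ℝ (b i) p (e i))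

variable {ι : Type} {U : ι → Set E} {e : ι → E}

lemma UB.bdd {k : ℕ} {b : ι → E → ℂ} (h : UB U e k b) :
    ∃ C : ℝ, ∀ i, ∀ p ∈ U i, ‖b i p‖ ≤ C := by
  cases k with
  | zero => exact h
  | succ k => exact h.1

lemma UB.pred {k : ℕ} {b : ι → E → ℂ} (h : UB U e (k + 1) b) : UB U e k b := by
  induction k generalizing b with
  | zero => exact h.1
  | succ k ih => exact ⟨h.1, h.2.1, ih h.2.2⟩

lemma UB.congr (hU : ∀ i, IsOpen (U i)) {k : ℕ} {b c : ι → E → ℂ} (h : UB U e k b)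
    (hbc : ∀ i, ∀ p ∈ U i, b i p = c i p) : UB U e k c := by
  induction k generalizing b c with
  | zero =>
    obtain ⟨C, hC⟩ := h
    exact ⟨C, fun i p hp => hbc i p hp ▸ hC i p hp⟩
  | succ k ih =>
    obtain ⟨⟨C, hC⟩, h2, h3⟩ := h
    have hev : ∀ i, ∀ p ∈ U i, b i =ᶠ[𝓝 p] c i := fun i p hp => by
      filter_upwards [(hU i).mem_nhds hp] with q hq using hbc i q hq
    refine ⟨⟨C, fun i p hp => hbc i p hp ▸ hC i p hp⟩, fun i p hp => ?_, ih h3 ?_⟩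
    · exact (h2 i p hp).congr_of_eventuallyEq (hev i p hp).symm
    · intro i p hp
      rw [(hev i p hp).fderiv_eq]

lemma UB.add (hU : ∀ i, IsOpen (U i)) {k : ℕ} {b c : ι → E → ℂ} (hb : UB U e k b)
    (hc : UB U e k c) : UB U e k (fun i p => b i p + c i p) := by
  induction k generalizing b c with
  | zero =>
    obtain ⟨C, hC⟩ := hb
    obtain ⟨D, hD⟩ := hc
    exact ⟨C + D, fun i p hp => (norm_add_le _ _).trans (add_le_add (hC i p hp) (hD i p hp))⟩
  | succ k ih =>
    obtain ⟨⟨C, hC⟩, b2, b3⟩ := hb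
    obtain ⟨⟨D, hD⟩, c2, c3⟩ := hc
    refine ⟨⟨C + D, fun i p hp => (norm_add_le _ _).trans (add_le_add (hC i p hp) (hD i p hp))⟩,
      fun i p hp => (b2 i p hp).add (c2 i p hp), (ih b3 c3).congr hU ?_⟩
    intro i p hp
    rw [fderiv_fun_add (b2 i p hp) (c2 i p hp)]
    rfl

lemma UB.mul (hU : ∀ i, IsOpen (U i)) {k : ℕ} {b c : ι → E → ℂ} (hb : UB U e k b)
    (hc : UB U e k c) : UB U e k (fun i p => b i p * c i p) := by
  have bd : ∀ {b c : ι → E → ℂ}, (∃ C : ℝ, ∀ i, ∀ p ∈ U i, ‖b i p‖ ≤ C) →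
      (∃ C : ℝ, ∀ i, ∀ p ∈ U i, ‖c i p‖ ≤ C) →
      (∃ C : ℝ, ∀ i, ∀ p ∈ U i, ‖b i p * c i p‖ ≤ C) := by
    rintro b c ⟨C, hC⟩ ⟨D, hD⟩
    refine ⟨C * D, fun i p hp => ?_⟩
    rw [norm_mul]
    exact mul_le_mul (hC i p hp) (hD i p hp) (norm_nonneg _) ((norm_nonneg _).trans (hC i p hp))
  induction k generalizing b c with
  | zero => exact bd hb hc
  | succ k ih =>
    refine ⟨bd hb.1 hc.1, fun i p hp => (hb.2.1 i p hp).mul (hc.2.1 i p hp),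
      ((ih hb.pred hc.2.2).add hU (ih hc.pred hb.2.2)).congr hU ?_⟩
    intro i p hp
    rw [fderiv_fun_mul (hb.2.1 i p hp) (hc.2.1 i p hp)]
    simp

lemma UB.inv (hU : ∀ i, IsOpen (U i)) {k : ℕ} {b : ι → E → ℂ} (hb : UB U e k b) {c : ℝ}
    (hc : 0 < c) (hbc : ∀ i, ∀ p ∈ U i, c ≤ ‖b i p‖) : UB U e k (fun i p => (b i p)⁻¹) := by
  have bd : ∃ C : ℝ, ∀ i, ∀ p ∈ U i, ‖(b i p)⁻¹‖ ≤ C := by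
    refine ⟨c⁻¹, fun i p hp => ?_⟩
    rw [norm_inv]
    exact inv_anti₀ hc (hbc i p hp)
  induction k generalizing b with
  | zero => exact bd
  | succ k ih =>
    have hne : ∀ i, ∀ p ∈ U i, b i p ≠ 0 := fun i p hp h0 => by
      have := hbc i p hp
      rw [h0, norm_zero] at this
      linarith
    have h1 := ih hb.pred hbc bd
    have hm : UB U e k (fun _ _ => (-1 : ℂ)) := by
      have : ∀ k : ℕ, UB U e k (fun _ _ => (0 : ℂ)) := by
        intro k
        induction k with
        | zero => exact ⟨0, by simp⟩
        | succ k ih => exact ⟨⟨0, by simp⟩, by simp, by simpa using ih⟩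
      cases k with
      | zero => exact ⟨1, by simp⟩
      | succ k => exact ⟨⟨1, by simp⟩, by simp, by simpa using this k⟩
    refine ⟨bd, fun i p hp => (hb.2.1 i p hp).inv (hne i p hp),
      (hm.mul hU (hb.2.2.mul hU (h1.mul hU h1))).congr hU ?_⟩
    intro i p hp
    have := ((hasDerivAt_inv (hne i p hp)).hasFDerivAt.restrictScalars ℝ).comp p
      (hb.2.1 i p hp).hasFDerivAt
    have h2 : fderiv ℝ (fun q => (b i q)⁻¹) p = _ := this.fderiv
    rw [h2]
    simp [pow_two]

lemma UB.shift {V : Type} [NormedAddCommGroup V] [NormedSpace ℝ V] (F : E → V)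
    (hF : ContDiff ℝ (⊤ : ℕ∞) F) (hFc : HasCompactSupport F) (w : ι → E) (T : ι → V →L[ℝ] ℂ)
    (M : ℝ) (hT : ∀ i, ‖T i‖ ≤ M) (he : ∀ i, ‖e i‖ ≤ 1) (k : ℕ) :
    UB U e k (fun i p => T i (F (p + w i))) := by
  have bd : ∀ {V : Type} [NormedAddCommGroup V] [NormedSpace ℝ V] (F : E → V)
    (hF : ContDiff ℝ (⊤ : ℕ∞) F) (hFc : HasCompactSupport F) (w : ι → E) (T : ι → V →L[ℝ] ℂ)
    (M : ℝ) (hT : ∀ i, ‖T i‖ ≤ M), ∃ C : ℝ, ∀ i, ∀ p ∈ U i, ‖T i (F (p + w i))‖ ≤ C := by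
    intro V _ _ F hF hFc w T M hT
    obtain ⟨C, hC⟩ := hF.continuous.bounded_above_of_compact_support hFc
    refine ⟨M * C, fun i p _ => ((T i).le_opNorm _).trans ?_⟩
    exact mul_le_mul (hT i) (hC _) (norm_nonneg _) ((norm_nonneg _).trans (hT i))
  induction k generalizing V with
  | zero => exact bd F hF hFc w T M hT
  | succ k ih =>
    have hd : ∀ i p, HasFDerivAt (fun p => T i (F (p + w i)))
        ((T i).comp (fderiv ℝ F (p + w i))) p := by
      intro i p
      have h1 : HasFDerivAt F (fderiv ℝ F (p + w i)) (p + w i) :=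
        (hF.differentiable (by simp) _).hasFDerivAt
      have h2 : HasFDerivAt (fun p : E => p + w i) (ContinuousLinearMap.id ℝ E) p :=
        (hasFDerivAt_id p).add_const _
      have h3 := (T i).hasFDerivAt.comp p (h1.comp p h2)
      rw [ContinuousLinearMap.comp_id] at h3
      exact h3
    refine ⟨bd F hF hFc w T M hT, fun i p _ => (hd i p).differentiableAt, ?_⟩
    have := ih (fderiv ℝ F) (hF.fderiv_right (by simp)) (hFc.fderiv ℝ)
      (fun i => (T i).comp (ContinuousLinearMap.apply ℝ V (e i))) (by
        intro i
        refine (ContinuousLinearMap.opNorm_comp_le _ _).trans ?_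
        have : ‖ContinuousLinearMap.apply ℝ V (e i)‖ ≤ 1 := by
          refine ContinuousLinearMap.opNorm_le_bound _ zero_le_one fun f => ?_
          simp only [ContinuousLinearMap.apply_apply]
          refine (f.le_opNorm _).trans ?_
          rw [one_mul]
          exact mul_le_of_le_one_right (norm_nonneg _) (he i)
        calc _ ≤ M * 1 := mul_le_mul (hT i) this (ContinuousLinearMap.opNorm_nonneg _) ((norm_nonneg _).trans (hT i))
          _ = M := mul_one _)
    convert this using 3 with i p
    rw [(hd i p).fderiv]
    simp

lemma UB.diff [FiniteDimensional ℝ E] {V : Type} [NormedAddCommGroup V] [NormedSpace ℝ V] (F : E → V)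
    (hF : ContDiff ℝ (⊤ : ℕ∞) F) (hFc : HasCompactSupport F) (w : ι → E) (T : ι → V →L[ℝ] ℂ)
    (M : ℝ) (hT : ∀ i, ‖T i‖ ≤ M) (he : ∀ i, ‖e i‖ ≤ 1) (k : ℕ) :
    UB U e k (fun i p => T i (‖w i‖⁻¹ • (F (p + w i) - F p))) := by
  have bd : ∀ {V : Type} [NormedAddCommGroup V] [NormedSpace ℝ V] (F : E → V)
    (hF : ContDiff ℝ (⊤ : ℕ∞) F) (hFc : HasCompactSupport F) (w : ι → E) (T : ι → V →L[ℝ] ℂ)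
    (M : ℝ) (hT : ∀ i, ‖T i‖ ≤ M),
      ∃ C : ℝ, ∀ i, ∀ p ∈ U i, ‖T i (‖w i‖⁻¹ • (F (p + w i) - F p))‖ ≤ C := by
    intro V _ _ F hF hFc w T M hT
    obtain ⟨C, hC⟩ := ContDiff.lipschitzWith_of_hasCompactSupport hFc hF (by simp)
    refine ⟨M * C, fun i p _ => ((T i).le_opNorm _).trans ?_⟩
    refine mul_le_mul (hT i) ?_ (norm_nonneg _) ((norm_nonneg _).trans (hT i))
    rw [norm_smul, norm_inv, norm_norm]
    have := hC.norm_sub_le (p + w i) p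
    rw [add_sub_cancel_left] at this
    rcases eq_or_ne (w i) 0 with h0 | h0
    · simp [h0]
    · rw [inv_mul_le_iff₀ (norm_pos_iff.2 h0), mul_comm]
      exact this
  induction k generalizing V with
  | zero => exact bd F hF hFc w T M hT
  | succ k ih =>
    have hd : ∀ i p, HasFDerivAt (fun p => T i (‖w i‖⁻¹ • (F (p + w i) - F p)))
        ((T i).comp (‖w i‖⁻¹ • (fderiv ℝ F (p + w i) - fderiv ℝ F p))) p := by
      intro i p
      have h0 : ∀ p, HasFDerivAt F (fderiv ℝ F p) p := fun p =>
        (hF.differentiable (by simp) _).hasFDerivAt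
      have h2 : HasFDerivAt (fun p : E => p + w i) (ContinuousLinearMap.id ℝ E) p :=
        (hasFDerivAt_id p).add_const _
      have h3 := (h0 (p + w i)).comp p h2
      rw [ContinuousLinearMap.comp_id] at h3
      have h4 := ((h3.sub (h0 p)).const_smul (‖w i‖⁻¹))
      exact (T i).hasFDerivAt.comp p h4
    refine ⟨bd F hF hFc w T M hT, fun i p _ => (hd i p).differentiableAt, ?_⟩
    have := ih (fderiv ℝ F) (hF.fderiv_right (by simp)) (hFc.fderiv ℝ)
      (fun i => (T i).comp (ContinuousLinearMap.apply ℝ V (e i))) (by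
        intro i
        refine (ContinuousLinearMap.opNorm_comp_le _ _).trans ?_
        have : ‖ContinuousLinearMap.apply ℝ V (e i)‖ ≤ 1 := by
          refine ContinuousLinearMap.opNorm_le_bound _ zero_le_one fun f => ?_
          simp only [ContinuousLinearMap.apply_apply]
          refine (f.le_opNorm _).trans ?_
          rw [one_mul]
          exact mul_le_of_le_one_right (norm_nonneg _) (he i)
        calc _ ≤ M * 1 := mul_le_mul (hT i) this (ContinuousLinearMap.opNorm_nonneg _) ((norm_nonneg _).trans (hT i))
          _ = M := mul_one _)
    convert this using 3 with i p
    rw [(hd i p).fderiv]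
    simp

variable [FiniteDimensional ℝ E] [MeasureSpace E] [BorelSpace E]
  [(volume : Measure E).IsAddHaarMeasure]

lemma ibp_step (ψ : E → ℝ) (hψ : ContDiff ℝ (⊤ : ℕ∞) ψ) (v : E) (b c : E → ℂ)
    (hc : ContDiff ℝ (⊤ : ℕ∞) c) (hcc : HasCompactSupport c)
    (hbc : ∀ p, b p = c p * ((fderiv ℝ ψ p v : ℝ) : ℂ)) (μ : ℝ) (hμ : 0 < μ) :
    ∫ p, Complex.exp (Complex.I * (μ * ψ p : ℝ)) * b p =
      (Complex.I / μ) * ∫ p, Complex.exp (Complex.I * (μ * ψ p : ℝ)) * fderiv ℝ c p v := by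
  set f : E → ℂ := fun p => Complex.exp (Complex.I * (μ * ψ p : ℝ)) with hf
  have hψ1 : ContDiff ℝ (⊤ : ℕ∞) (fun p => Complex.I * ((μ * ψ p : ℝ) : ℂ)) :=
    contDiff_const.mul (Complex.ofRealCLM.contDiff.comp (contDiff_const.mul hψ))
  have hfs : ContDiff ℝ (⊤ : ℕ∞) f := hψ1.cexp
  have hfd : ∀ p, fderiv ℝ f p v = Complex.I * μ * (fderiv ℝ ψ p v : ℝ) * f p := by
    intro p
    have h1 : HasFDerivAt ψ (fderiv ℝ ψ p) p := (hψ.differentiable (by simp) p).hasFDerivAt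
    have h2 : HasFDerivAt (fun p => ((μ * ψ p : ℝ) : ℂ)) (Complex.ofRealCLM.comp (μ • fderiv ℝ ψ p)) p :=
      Complex.ofRealCLM.hasFDerivAt.comp p (h1.const_mul μ)
    have h3 := (h2.const_mul Complex.I).cexp
    have h4 : fderiv ℝ f p = _ := h3.fderiv
    rw [h4]
    simp [hf]
    ring
  have hcv : ContDiff ℝ (⊤ : ℕ∞) (fun p => fderiv ℝ c p v) :=
    (hc.fderiv_right (by simp)).clm_apply contDiff_const
  have hfv : ContDiff ℝ (⊤ : ℕ∞) (fun p => fderiv ℝ f p v) :=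
    (hfs.fderiv_right (by simp)).clm_apply contDiff_const
  have hcvc : HasCompactSupport (fun p => fderiv ℝ c p v) := hcc.fderiv_apply ℝ v
  have key := integral_mul_fderiv_eq_neg_fderiv_mul_of_integrable (μ := (volume : Measure E))
    (f := f) (g := c) (v := v)
    ((hfv.continuous.mul hc.continuous).integrable_of_hasCompactSupport hcc.mul_left)
    ((hfs.continuous.mul hcv.continuous).integrable_of_hasCompactSupport hcvc.mul_left)
    ((hfs.continuous.mul hc.continuous).integrable_of_hasCompactSupport hcc.mul_left)
    (fun x _ => hfs.differentiable (by simp) x) (fun x _ => hc.differentiable (by simp) x)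
  rw [key]
  have : (fun p => fderiv ℝ f p v * c p) = fun p => (Complex.I * μ) * (f p * b p) := by
    funext p
    rw [hfd, hbc]
    ring
  rw [this, integral_const_mul]
  have hμ' : (μ : ℂ) ≠ 0 := by exact_mod_cast hμ.ne'
  field_simp
  rw [Complex.I_sq]
  ring

lemma nonstat {K : Set E} (hK : IsCompact K) {S : ι → Set E} (hS : ∀ i, IsClosed (S i))
    (hSK : ∀ i, S i ⊆ K) (hSU : ∀ i, S i ⊆ U i) (hU : ∀ i, IsOpen (U i))
    (ψ : ι → E → ℝ) (hψ : ∀ i, ContDiff ℝ (⊤ : ℕ∞) (ψ i)) {c : ℝ} (hc : 0 < c)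
    (hlow : ∀ i, ∀ p ∈ U i, c ≤ ‖((fderiv ℝ (ψ i) p (e i) : ℝ) : ℂ)‖)
    (hD : ∀ k, UB U e k (fun i p => ((fderiv ℝ (ψ i) p (e i) : ℝ) : ℂ)))
    (N : ℕ) (b : ι → E → ℂ) (hbs : ∀ i, ContDiff ℝ (⊤ : ℕ∞) (b i))
    (hb0 : ∀ i, ∀ p ∉ S i, b i p = 0) (hb : ∀ k, UB U e k b) :
    ∃ C : ℝ, ∀ i, ∀ μ : ℝ, 0 < μ →
      ‖∫ p, Complex.exp (Complex.I * (μ * ψ i p : ℝ)) * b i p‖ * μ ^ N ≤ C := by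
  have hSc : ∀ i, IsCompact (S i) := fun i => hK.of_isClosed_subset (hS i) (hSK i)
  induction N generalizing b with
  | zero =>
    obtain ⟨C, hC⟩ := (hb 0).bdd
    refine ⟨max C 0 * volume.real K, fun i μ hμ => ?_⟩
    rw [pow_zero, mul_one]
    rw [← setIntegral_eq_integral_of_forall_compl_eq_zero (s := K)]
    · refine norm_setIntegral_le_of_norm_le_const hK.measure_lt_top ?_
      intro p hp
      rw [norm_mul, mul_comm Complex.I, Complex.norm_exp_ofReal_mul_I, one_mul]
      by_cases hpS : p ∈ S i
      · exact (hC i p (hSU i hpS)).trans (le_max_left _ _)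
      · rw [hb0 i p hpS]
        simp
    · intro p hp
      rw [hb0 i p (fun h => hp (hSK i h)), mul_zero]
  | succ N ih =>
    set D : ι → E → ℂ := fun i p => ((fderiv ℝ (ψ i) p (e i) : ℝ) : ℂ) with hDdef
    have hDs : ∀ i, ContDiff ℝ (⊤ : ℕ∞) (D i) := fun i =>
      Complex.ofRealCLM.contDiff.comp (((hψ i).fderiv_right (by simp)).clm_apply contDiff_const)
    have hne : ∀ i, ∀ p ∈ U i, D i p ≠ 0 := fun i p hp h0 => by
      have := hlow i p hp
      change c ≤ ‖D i p‖ at this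
      rw [h0, norm_zero] at this
      linarith
    set q : ι → E → ℂ := fun i p => b i p * (D i p)⁻¹ with hq
    have hq0 : ∀ i, ∀ p ∉ S i, q i p = 0 := fun i p hp => by simp [hq, hb0 i p hp]
    have hev : ∀ i, ∀ p ∉ S i, q i =ᶠ[𝓝 p] fun _ => 0 := fun i p hp => by
      filter_upwards [(hS i).isOpen_compl.mem_nhds hp] with r hr using hq0 i r hr
    have hqs : ∀ i, ContDiff ℝ (⊤ : ℕ∞) (q i) := by
      intro i
      rw [contDiff_iff_contDiffAt]
      intro p
      by_cases hp : p ∈ S i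
      · exact (hbs i).contDiffAt.mul ((hDs i).contDiffAt.inv (hne i p (hSU i hp)))
      · exact contDiffAt_const.congr_of_eventuallyEq (hev i p hp)
    have hqb : ∀ k, UB U e k q := fun k => (hb k).mul hU ((hD k).inv hU hc hlow)
    obtain ⟨C, hC⟩ := ih (fun i p => fderiv ℝ (q i) p (e i))
      (fun i => ((hqs i).fderiv_right (by simp)).clm_apply contDiff_const)
      (fun i p hp => by rw [(hev i p hp).fderiv_eq]; simp) (fun k => (hqb (k + 1)).2.2)
    refine ⟨C, fun i μ hμ => ?_⟩
    have h1 := ibp_step (ψ i) (hψ i) (e i) (b i) (q i) (hqs i)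
      (HasCompactSupport.intro (hSc i) (hq0 i)) (by
        intro p
        by_cases hp : p ∈ S i
        · have := hne i p (hSU i hp)
          change _ = b i p * (D i p)⁻¹ * D i p
          field_simp
        · rw [hb0 i p hp, hq0 i p hp, zero_mul]) μ hμ
    rw [h1, norm_mul, norm_div, Complex.norm_I, Complex.norm_real, Real.norm_of_nonneg hμ.le]
    refine le_trans (le_of_eq ?_) (hC i μ hμ)
    field_simp
    ring

lemma tt_star (A : E → ℂ) (hA : Continuous A) (hAc : HasCompactSupport A) :
    ‖∫ p, A p‖ ^ 2 = ‖∫ z, ∫ q, A (q + z) * (starRingEnd ℂ) (A q)‖ := by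
  have h1 : ∫ z, ∫ q, A (q + z) * (starRingEnd ℂ) (A q) =
      ∫ q, ∫ z, A (q + z) * (starRingEnd ℂ) (A q) := by
    apply integral_integral_swap
    have hcont : Continuous (fun r : E × E => A (r.2 + r.1) * (starRingEnd ℂ) (A r.2)) := by
      have : Continuous (starRingEnd ℂ) := Complex.continuous_conj
      fun_prop
    refine hcont.integrable_of_hasCompactSupport ?_
    have hAc' : IsCompact (tsupport A) := hAc
    refine HasCompactSupport.intro
      (K := (Set.image (fun r : E × E => r.1 - r.2) (tsupport A ×ˢ tsupport A)) ×ˢ tsupport A)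
      (((hAc'.prod hAc').image (by fun_prop)).prod hAc') ?_
    rintro ⟨z, q⟩ hzq
    by_cases hq : q ∈ tsupport A
    · have : q + z ∉ tsupport A := fun h => hzq ⟨⟨(q + z, q), ⟨h, hq⟩, by simp⟩, hq⟩
      simp [image_eq_zero_of_notMem_tsupport this]
    · simp [image_eq_zero_of_notMem_tsupport hq]
  rw [h1]
  have h2 : ∀ q, ∫ z, A (q + z) * (starRingEnd ℂ) (A q) = (∫ p, A p) * (starRingEnd ℂ) (A q) := by
    intro q
    rw [integral_mul_const, integral_add_left_eq_self (fun p => A p) q]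
  simp_rw [h2]
  rw [integral_const_mul, integral_conj, norm_mul, RCLike.norm_conj, pow_two]

/-- Uniform decay of the oscillatory integral with phase `t φ + L`. -/
def OscBound (φ : E → ℝ) (a : E → ℂ) : Prop :=
  ∃ C : ℝ, ∀ t : ℝ, 0 < t → ∀ L : E →L[ℝ] ℝ,
    ‖∫ p, Complex.exp (Complex.I * (t * φ p + L p : ℝ)) * a p‖ ^ 2 *
      t ^ (Module.finrank ℝ E) ≤ C

lemma osc_local (φ : E → ℝ) (hφ : ContDiff ℝ (⊤ : ℕ∞) φ) (hφc : HasCompactSupport φ) (p0 : E)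
    (hinj : Function.Injective (fderiv ℝ (fderiv ℝ φ) p0)) :
    ∃ B : Set E, IsOpen B ∧ p0 ∈ B ∧ ∀ a : E → ℂ, ContDiff ℝ (⊤ : ℕ∞) a → HasCompactSupport a →
      tsupport a ⊆ B → OscBound φ a := by
  set A := fderiv ℝ (fderiv ℝ φ) p0 with hA
  have hφ1 : ContDiff ℝ (⊤ : ℕ∞) (fderiv ℝ φ) := hφ.fderiv_right (by simp)
  obtain ⟨K0, hK0, hanti⟩ := LinearMap.exists_antilipschitzWith (A : E →ₗ[ℝ] (E →L[ℝ] ℝ))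
    (LinearMap.ker_eq_bot.2 hinj)
  have hK0' : (0 : ℝ) < K0 := hK0
  have hAz : ∀ z, ‖z‖ ≤ K0 * ‖A z‖ := fun z => by
    have := hanti.le_mul_dist z 0
    simpa using this
  have hstrict : HasStrictFDerivAt (fderiv ℝ φ) A p0 :=
    hφ1.contDiffAt.hasStrictFDerivAt (by simp)
  obtain ⟨s, hs, happ⟩ := hstrict.approximates_deriv_on_nhds (c := (4 * K0)⁻¹)
    (Or.inr (by positivity))
  refine ⟨interior s, isOpen_interior, mem_interior_iff_mem_nhds.2 hs, ?_⟩
  intro a ha hac hasub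
  set B := interior s with hB
  set K := tsupport a with hKdef
  have hK : IsCompact K := hac
  have hex : ∀ z : {z : E // z ≠ 0}, ∃ v : E, ‖v‖ < 1 ∧ ‖z.1‖ / (2 * K0) < ‖A z.1 v‖ := by
    intro z
    apply ContinuousLinearMap.exists_lt_apply_of_lt_opNorm
    have h1 := hAz z.1
    have h2 : 0 < ‖z.1‖ := norm_pos_iff.2 z.2
    rw [div_lt_iff₀ (by positivity)]
    nlinarith
  choose v hv1 hv2 using hex
  set U : {z : E // z ≠ 0} → Set E := fun z => {p | p ∈ B ∧ p + z.1 ∈ B} with hUdef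
  set S : {z : E // z ≠ 0} → Set E := fun z => {p | p ∈ K ∧ p + z.1 ∈ K} with hSdef
  have hU : ∀ z, IsOpen (U z) := fun z =>
    isOpen_interior.inter (isOpen_interior.preimage (continuous_id.add continuous_const))
  have hS : ∀ z, IsClosed (S z) := fun z =>
    hK.isClosed.inter (hK.isClosed.preimage (continuous_id.add continuous_const))
  have hSU : ∀ z, S z ⊆ U z := fun z p hp => ⟨hasub hp.1, hasub hp.2⟩
  have hSK : ∀ z, S z ⊆ K := fun z p hp => hp.1
  set ψ : {z : E // z ≠ 0} → E → ℝ := fun z p => ‖z.1‖⁻¹ * (φ (p + z.1) - φ p) with hψdef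
  have hsh : ∀ z : E, ContDiff ℝ (⊤ : ℕ∞) (fun p : E => p + z) := fun z =>
    contDiff_id.add contDiff_const
  have hψ : ∀ z, ContDiff ℝ (⊤ : ℕ∞) (ψ z) := fun z =>
    contDiff_const.mul ((hφ.comp (hsh z.1)).sub hφ)
  have hψd : ∀ z p w, fderiv ℝ (ψ z) p w =
      ‖z.1‖⁻¹ * ((fderiv ℝ φ (p + z.1) - fderiv ℝ φ p) w) := by
    intro z p w
    have h0 : ∀ p, HasFDerivAt φ (fderiv ℝ φ p) p := fun p =>
      (hφ.differentiable (by simp) _).hasFDerivAt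
    have h2 : HasFDerivAt (fun p : E => p + z.1) (ContinuousLinearMap.id ℝ E) p :=
      (hasFDerivAt_id p).add_const _
    have h3 := (h0 (p + z.1)).comp p h2
    rw [ContinuousLinearMap.comp_id] at h3
    have h4 := ((h3.sub (h0 p)).const_mul (‖z.1‖⁻¹))
    have h5 : fderiv ℝ (ψ z) p = _ := h4.fderiv
    rw [h5]
    rfl
  have hlow : ∀ z, ∀ p ∈ U z, (4 * K0 : ℝ)⁻¹ ≤ ‖((fderiv ℝ (ψ z) p (v z) : ℝ) : ℂ)‖ := by
    intro z p hp
    have h2 : 0 < ‖z.1‖ := norm_pos_iff.2 z.2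
    rw [Complex.norm_real, hψd, norm_mul, norm_inv, norm_norm, le_inv_mul_iff₀ h2]
    have h3 := happ (p + z.1) (interior_subset hp.2) p (interior_subset hp.1)
    rw [add_sub_cancel_left] at h3
    have h4 : ‖(fderiv ℝ φ (p + z.1) - fderiv ℝ φ p - A z.1) (v z)‖ ≤ (4 * K0 : ℝ)⁻¹ * ‖z.1‖ := by
      refine (ContinuousLinearMap.le_opNorm _ _).trans ?_
      calc _ ≤ ‖fderiv ℝ φ (p + z.1) - fderiv ℝ φ p - A z.1‖ * 1 :=
            mul_le_mul_of_nonneg_left (hv1 z).le (norm_nonneg _)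
        _ ≤ _ := by rw [mul_one]; simpa using h3
    have h5 := hv2 z
    have h6 : ‖A z.1 (v z)‖ ≤ ‖(fderiv ℝ φ (p + z.1) - fderiv ℝ φ p) (v z)‖ +
        ‖(fderiv ℝ φ (p + z.1) - fderiv ℝ φ p - A z.1) (v z)‖ := by
      have : A z.1 (v z) = (fderiv ℝ φ (p + z.1) - fderiv ℝ φ p) (v z) -
        (fderiv ℝ φ (p + z.1) - fderiv ℝ φ p - A z.1) (v z) := by simp
      rw [this]
      exact norm_sub_le _ _
    have h7 : ‖z.1‖ / (2 * K0) = (4 * K0 : ℝ)⁻¹ * ‖z.1‖ + (4 * K0 : ℝ)⁻¹ * ‖z.1‖ := by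
      field_simp
      ring
    linarith [mul_comm ‖z.1‖ (4 * K0 : ℝ)⁻¹]
  have hD : ∀ k, UB U v k (fun z p => ((fderiv ℝ (ψ z) p (v z) : ℝ) : ℂ)) := by
    intro k
    have := UB.diff (U := U) (e := v) (fderiv ℝ φ) hφ1 (hφc.fderiv ℝ) (fun z => z.1)
      (fun z => Complex.ofRealCLM.comp (ContinuousLinearMap.apply ℝ ℝ (v z))) 1 (by
        intro z
        refine ContinuousLinearMap.opNorm_le_bound _ zero_le_one fun f => ?_
        simp only [ContinuousLinearMap.comp_apply, ContinuousLinearMap.apply_apply,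
          Complex.ofRealCLM_apply, Complex.norm_real]
        refine (f.le_opNorm _).trans ?_
        rw [one_mul]
        exact mul_le_of_le_one_right (norm_nonneg _) (hv1 z).le) (fun z => (hv1 z).le) k
    convert this using 3 with z p
    rw [hψd]
    simp
  set b : {z : E // z ≠ 0} → E → ℂ := fun z p => a (p + z.1) * (starRingEnd ℂ) (a p) with hbdef
  have hconj : ContDiff ℝ (⊤ : ℕ∞) (fun p => (starRingEnd ℂ) (a p)) :=
    (Complex.conjCLE.contDiff).comp ha
  have hbs : ∀ z, ContDiff ℝ (⊤ : ℕ∞) (b z) := fun z => (ha.comp (hsh z.1)).mul hconj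
  have hb0 : ∀ z, ∀ p ∉ S z, b z p = 0 := by
    intro z p hp
    by_cases hpK : p ∈ K
    · have : p + z.1 ∉ tsupport a := fun h => hp ⟨hpK, h⟩
      simp [hbdef, image_eq_zero_of_notMem_tsupport this]
    · simp [hbdef, image_eq_zero_of_notMem_tsupport hpK]
  have hb : ∀ k, UB U v k b := by
    intro k
    have h1 := UB.shift (U := U) (e := v) a ha hac (fun z => z.1)
      (fun _ => ContinuousLinearMap.id ℝ ℂ) 1
      (fun _ => ContinuousLinearMap.norm_id_le) (fun z => (hv1 z).le) k
    have h2 := UB.shift (U := U) (e := v) a ha hac (fun _ => 0)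
      (fun _ => (Complex.conjCLE : ℂ →L[ℝ] ℂ)) ‖(Complex.conjCLE : ℂ →L[ℝ] ℂ)‖
      (fun _ => le_rfl) (fun z => (hv1 z).le) k
    have := h1.mul hU h2
    simpa [hbdef] using this
  obtain ⟨C1, hC1⟩ := nonstat hK hS hSK hSU hU ψ hψ (c := (4 * K0 : ℝ)⁻¹) (by positivity) hlow hD
    (Module.finrank ℝ E + 1) b hbs hb0 hb
  obtain ⟨C0, hC0⟩ := nonstat hK hS hSK hSU hU ψ hψ (c := (4 * K0 : ℝ)⁻¹) (by positivity) hlow hD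
    0 b hbs hb0 hb
  set n := Module.finrank ℝ E with hn
  set J : E → ℝ := fun z => (1 + ‖z‖) ^ (-((n : ℝ) + 1)) with hJ
  have hJi : Integrable J := integrable_one_add_norm (by simp [hn])
  set C00 : ℝ := ∫ q, ‖a q‖ ^ 2 with hC00
  have hC00n : 0 ≤ C00 := integral_nonneg fun _ => by positivity
  set C2 : ℝ := 2 ^ (n + 1) * (|C0| + |C1|) + C00 with hC2
  refine ⟨C2 * ∫ z, J z, fun t ht L => ?_⟩
  set Af : E → ℂ := fun p => Complex.exp (Complex.I * (t * φ p + L p : ℝ)) * a p with hAf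
  have hAfc : Continuous Af := by
    have h1 := hφ.continuous
    have h2 := ha.continuous
    have h3 := L.continuous
    fun_prop
  have hAfs : HasCompactSupport Af := hac.mul_left
  rw [tt_star Af hAfc hAfs]
  have hnorm : ∀ θ : ℝ, ‖Complex.exp (Complex.I * θ)‖ = 1 := fun θ => by
    rw [mul_comm, Complex.norm_exp_ofReal_mul_I]
  have hbound : ∀ z, ‖∫ q, Af (q + z) * (starRingEnd ℂ) (Af q)‖ ≤ C2 * J (t • z) := by
    intro z
    have hJ' : J (t • z) * (1 + t * ‖z‖) ^ (n + 1) = 1 := by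
      have : 0 < 1 + t * ‖z‖ := by positivity
      simp only [hJ]
      rw [norm_smul, Real.norm_of_nonneg ht.le, ← Real.rpow_natCast, ← Real.rpow_add this]
      simp
    rcases eq_or_ne z 0 with h0 | h0
    · have h1 : ∀ q, Af (q + z) * (starRingEnd ℂ) (Af q) = ((‖a q‖ ^ 2 : ℝ) : ℂ) := by
        intro q
        rw [h0, add_zero, Complex.mul_conj, Complex.normSq_eq_norm_sq]
        simp only [hAf]
        rw [norm_mul, hnorm, one_mul]
      simp_rw [h1]
      rw [integral_complex_ofReal, Complex.norm_real, Real.norm_of_nonneg hC00n]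
      have : J (t • z) = 1 := by simp [hJ, h0]
      rw [this, mul_one, hC2]
      have : 0 ≤ 2 ^ (n + 1) * (|C0| + |C1|) := by positivity
      linarith
    · have hz : 0 < ‖z‖ := norm_pos_iff.2 h0
      set μ := t * ‖z‖ with hμ
      have hμp : 0 < μ := by positivity
      set I0 := ∫ p, Complex.exp (Complex.I * (μ * ψ ⟨z, h0⟩ p : ℝ)) * b ⟨z, h0⟩ p with hI0
      have h1 : ∫ q, Af (q + z) * (starRingEnd ℂ) (Af q) = Complex.exp (Complex.I * (L z : ℝ)) * I0 := by
        rw [hI0, ← integral_const_mul]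
        congr 1
        funext q
        simp only [hAf, hbdef, hψdef, map_mul]
        rw [← Complex.exp_conj]
        have h3 : ∀ x y u w : ℂ, Complex.exp x * y * (Complex.exp u * w) =
            Complex.exp (x + u) * (y * w) := by
          intros
          rw [Complex.exp_add]; ring
        have h4 : ∀ x y u : ℂ, Complex.exp x * (Complex.exp y * u) =
            Complex.exp (x + y) * u := by
          intros
          rw [Complex.exp_add]; ring
        rw [h3, h4]
        · congr 2
          simp only [map_mul, Complex.conj_I, Complex.conj_ofReal, hμ]
          push_cast
          rw [map_add]
          push_cast
          have : (‖z‖ : ℂ) ≠ 0 := by exact_mod_cast hz.ne'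
          field_simp
          ring
      rw [h1, norm_mul, hnorm, one_mul]
      have e1 := hC1 ⟨z, h0⟩ μ hμp
      have e0 := hC0 ⟨z, h0⟩ μ hμp
      rw [← hI0] at e1 e0
      rw [pow_zero, mul_one] at e0
      have e2 : (1 + μ) ^ (n + 1) ≤ 2 ^ (n + 1) * (1 + μ ^ (n + 1)) := by
        have := add_pow_le (zero_le_one) hμp.le (n + 1)
        simp only [one_pow] at this
        refine this.trans ?_
        have h3 : (2 : ℝ) ^ (n + 1 - 1) ≤ 2 ^ (n + 1) :=
          pow_le_pow_right₀ (by norm_num) (by omega)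
        exact mul_le_mul_of_nonneg_right h3 (by positivity)
      have e3 : ‖I0‖ * (1 + μ) ^ (n + 1) ≤ C2 := by
        calc ‖I0‖ * (1 + μ) ^ (n + 1) ≤ ‖I0‖ * (2 ^ (n + 1) * (1 + μ ^ (n + 1))) :=
              mul_le_mul_of_nonneg_left e2 (norm_nonneg _)
          _ = 2 ^ (n + 1) * (‖I0‖ + ‖I0‖ * μ ^ (n + 1)) := by ring
          _ ≤ 2 ^ (n + 1) * (|C0| + |C1|) := by
              refine mul_le_mul_of_nonneg_left ?_ (by positivity)
              exact add_le_add (e0.trans (le_abs_self _)) (e1.trans (le_abs_self _))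
          _ ≤ C2 := by rw [hC2]; linarith
      have hJp : 0 ≤ J (t • z) := by simp only [hJ]; positivity
      calc ‖I0‖ = ‖I0‖ * (1 + μ) ^ (n + 1) * J (t • z) := by
            rw [mul_assoc, mul_comm _ (J _), hJ', mul_one]
        _ ≤ C2 * J (t • z) := mul_le_mul_of_nonneg_right e3 hJp
  have hintg : Integrable (fun z => C2 * J (t • z)) := (hJi.comp_smul ht.ne').const_mul C2
  have h9 := norm_integral_le_of_norm_le hintg (ae_of_all _ hbound)
  rw [integral_const_mul, Measure.integral_comp_smul_of_nonneg volume J t (hR := ht.le)] at h9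
  rw [← hn, smul_eq_mul] at h9
  have htn : 0 < t ^ n := by positivity
  calc _ ≤ C2 * ((t ^ n)⁻¹ * ∫ z, J z) * t ^ n := mul_le_mul_of_nonneg_right h9 htn.le
    _ = _ := by field_simp

lemma OscBound.add {φ : E → ℝ} (hφ : Continuous φ) {a b : E → ℂ} (ha : Continuous a)
    (hac : HasCompactSupport a) (hb : Continuous b) (hbc : HasCompactSupport b)
    (h1 : OscBound φ a) (h2 : OscBound φ b) : OscBound φ (fun p => a p + b p) := by
  obtain ⟨C1, h1⟩ := h1
  obtain ⟨C2, h2⟩ := h2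
  refine ⟨2 * C1 + 2 * C2, fun t ht L => ?_⟩
  have e1 := h1 t ht L
  have e2 := h2 t ht L
  have hi : ∀ c : E → ℂ, Continuous c → HasCompactSupport c →
      Integrable (fun p => Complex.exp (Complex.I * (t * φ p + L p : ℝ)) * c p) := by
    intro c hc hcc
    have h3 := L.continuous
    refine Continuous.integrable_of_hasCompactSupport (by fun_prop) hcc.mul_left
  simp_rw [mul_add]
  rw [integral_add (hi a ha hac) (hi b hb hbc)]
  set x := ∫ p, Complex.exp (Complex.I * (t * φ p + L p : ℝ)) * a p
  set y := ∫ p, Complex.exp (Complex.I * (t * φ p + L p : ℝ)) * b p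
  have h5 : ‖x + y‖ ^ 2 ≤ 2 * ‖x‖ ^ 2 + 2 * ‖y‖ ^ 2 := by
    have := norm_add_le x y
    have h6 := norm_nonneg (x + y)
    nlinarith [sq_nonneg (‖x‖ - ‖y‖)]
  have htn : 0 < t ^ (Module.finrank ℝ E) := by positivity
  nlinarith [mul_le_mul_of_nonneg_right h5 htn.le]

lemma smooth_cutoff {K V : Set E} (hK : IsClosed K) (hV : IsOpen V) (hKV : K ⊆ V) :
    ∃ f : E → ℝ, ContDiff ℝ (⊤ : ℕ∞) f ∧ (∃ W, IsOpen W ∧ K ⊆ W ∧ ∀ p ∈ W, f p = 1) ∧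
      tsupport f ⊆ V := by
  obtain ⟨V1, hV1, hKV1, hV1V⟩ := normal_exists_closure_subset hK hV hKV
  obtain ⟨W, hW, hKW, hWV1⟩ := normal_exists_closure_subset hK hV1 hKV1
  obtain ⟨f, hf, -, h2, h3⟩ := exists_contMDiff_support_eq_eq_one_iff
    (modelWithCornersSelf ℝ E) (n := ⊤) hV1 (isClosed_closure (s := W)) hWV1
  refine ⟨f, hf.contDiff, ⟨W, hW, hKW, fun p hp => (h3 p).1 (subset_closure hp)⟩, ?_⟩
  rw [tsupport, h2]
  exact hV1V

lemma osc_global (φ : E → ℝ) (hφ : ContDiff ℝ (⊤ : ℕ∞) φ) (hφc : HasCompactSupport φ)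
    (a : E → ℂ) (ha : ContDiff ℝ (⊤ : ℕ∞) a) (hac : HasCompactSupport a)
    (hinj : ∀ p ∈ tsupport a, Function.Injective (fderiv ℝ (fderiv ℝ φ) p)) :
    OscBound φ a := by
  have hac' : IsCompact (tsupport a) := hac
  have key : ∃ V, IsOpen V ∧ tsupport a ⊆ V ∧ ∀ b : E → ℂ, ContDiff ℝ (⊤ : ℕ∞) b →
      HasCompactSupport b → tsupport b ⊆ V → OscBound φ b := by
    refine hac'.induction_on (p := fun s => ∃ V, IsOpen V ∧ s ⊆ V ∧ ∀ b : E → ℂ,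
      ContDiff ℝ (⊤ : ℕ∞) b → HasCompactSupport b → tsupport b ⊆ V → OscBound φ b) ?_ ?_ ?_ ?_
    · refine ⟨∅, isOpen_empty, subset_rfl, fun b _ _ hb => ⟨0, fun t ht L => ?_⟩⟩
      have : b = 0 := by
        funext p
        exact image_eq_zero_of_notMem_tsupport fun h => hb h
      simp [this]
    · rintro s t hst ⟨V, h1, h2, h3⟩
      exact ⟨V, h1, hst.trans h2, h3⟩
    · rintro s1 s2 ⟨V1, o1, i1, h1⟩ ⟨V2, o2, i2, h2⟩
      refine ⟨V1 ∪ V2, o1.union o2, Set.union_subset_union i1 i2, fun b hb hbc hbV => ?_⟩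
      obtain ⟨f, hf, ⟨W, hW, hKW, hfW⟩, hfV⟩ := smooth_cutoff (K := tsupport b \ V2) (V := V1)
        ((isClosed_tsupport b).sdiff o2) o1 (fun p hp => (hbV hp.1).resolve_right hp.2)
      have hfC : ContDiff ℝ (⊤ : ℕ∞) (fun p => (f p : ℂ)) := Complex.ofRealCLM.contDiff.comp hf
      have hb1 : ContDiff ℝ (⊤ : ℕ∞) (fun p => (f p : ℂ) * b p) := hfC.mul hb
      have hb2 : ContDiff ℝ (⊤ : ℕ∞) (fun p => (1 - (f p : ℂ)) * b p) :=
        (contDiff_const.sub hfC).mul hb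
      have e : b = fun p => (f p : ℂ) * b p + (1 - (f p : ℂ)) * b p := by
        funext p; ring
      rw [e]
      refine OscBound.add hφ.continuous hb1.continuous hbc.mul_left hb2.continuous hbc.mul_left
        (h1 _ hb1 hbc.mul_left ?_) (h2 _ hb2 hbc.mul_left ?_)
      · refine (closure_mono ?_).trans hfV
        intro p hp h0
        apply hp
        simp [h0]
      · intro p hp
        have hpb : p ∈ tsupport b := tsupport_mul_subset_right hp
        by_contra hpV
        have hpW : p ∈ W := hKW ⟨hpb, hpV⟩
        refine notMem_tsupport_iff_eventuallyEq.2 ?_ hp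
        filter_upwards [hW.mem_nhds hpW] with q hq
        simp [hfW q hq]
    · intro p hp
      obtain ⟨B, hB, hpB, h⟩ := osc_local φ hφ hφc p (hinj p hp)
      exact ⟨B, mem_nhdsWithin_of_mem_nhds (hB.mem_nhds hpB), B, hB, subset_rfl, h⟩
  obtain ⟨V, -, hV, h⟩ := key
  exact h a ha hac hV

end Osc

section OneD

lemma intOn_rpow_exp {lam c : ℝ} (hlam : 0 < lam) (hc : 0 < c) :
    IntegrableOn (fun w : ℝ => w ^ lam * Real.exp (-(c * w))) (Set.Ioi 0) := by
  have := integrableOn_rpow_mul_exp_neg_mul_rpow (s := lam) (p := 1) (b := c) (by linarith)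
    zero_lt_one hc
  simpa using this

lemma norm_cexp_aux (z : ℂ) (w : ℝ) : ‖Complex.exp (-(z * w))‖ = Real.exp (-(z.re * w)) := by
  rw [Complex.norm_exp]
  simp

lemma gamma_complex {lam : ℝ} (hlam : 0 < lam) (z : ℂ) (hz : 0 < z.re) :
    ∫ w in Set.Ioi (0 : ℝ), ((w ^ lam : ℝ) : ℂ) * Complex.exp (-(z * w)) =
      (1 / z) ^ ((lam : ℂ) + 1) * Complex.Gamma ((lam : ℂ) + 1) := by
  set f : ℂ → ℂ := fun z => ∫ w in Set.Ioi (0 : ℝ), ((w ^ lam : ℝ) : ℂ) * Complex.exp (-(z * w))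
    with hf
  set g : ℂ → ℂ := fun z => (1 / z) ^ ((lam : ℂ) + 1) * Complex.Gamma ((lam : ℂ) + 1) with hg
  set U : Set ℂ := {z | 0 < z.re} with hU
  have hUo : IsOpen U := isOpen_lt continuous_const Complex.continuous_re
  have hmeas : ∀ z : ℂ, ∀ s : ℝ, 0 < s → AEStronglyMeasurable
      (fun w : ℝ => ((w ^ s : ℝ) : ℂ) * Complex.exp (-(z * w)))
      (volume.restrict (Set.Ioi 0)) := by
    intro z s hs
    have : Continuous (fun w : ℝ => w ^ s) := Real.continuous_rpow_const hs.le
    have h2 : Continuous (fun w : ℝ => ((w ^ s : ℝ) : ℂ) * Complex.exp (-(z * w))) := by fun_prop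
    exact h2.aestronglyMeasurable
  have hfd : DifferentiableOn ℂ f U := by
    intro z0 hz0
    have hz0' : 0 < z0.re := hz0
    refine DifferentiableAt.differentiableWithinAt ?_
    have := hasDerivAt_integral_of_dominated_loc_of_deriv_le
      (μ := volume.restrict (Set.Ioi (0:ℝ))) (𝕜 := ℂ) (x₀ := z0)
      (F := fun z w => ((w ^ lam : ℝ) : ℂ) * Complex.exp (-(z * w)))
      (F' := fun z w => -(((w ^ (lam + 1) : ℝ) : ℂ) * Complex.exp (-(z * w))))
      (s := {z | z0.re / 2 < z.re})
      (bound := fun w => w ^ (lam + 1) * Real.exp (-(z0.re / 2 * w)))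
      ((isOpen_lt continuous_const Complex.continuous_re).mem_nhds (by simp; linarith))
      (Eventually.of_forall fun z => hmeas z _ hlam) ?_ (hmeas z0 _ (by linarith)).neg ?_
      (intOn_rpow_exp (by linarith) (by linarith)) ?_
    · exact this.2.differentiableAt
    · refine (intOn_rpow_exp hlam hz0').mono' (hmeas z0 _ hlam) ?_
      refine (ae_restrict_iff' measurableSet_Ioi).2 (ae_of_all _ fun w hw => ?_)
      have hw' : (0:ℝ) < w := hw
      rw [norm_mul, norm_cexp_aux, Complex.norm_real, Real.norm_of_nonneg (by positivity)]
    · refine (ae_restrict_iff' measurableSet_Ioi).2 (ae_of_all _ fun w hw z hz => ?_)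
      have hw' : (0:ℝ) < w := hw
      have hz' : z0.re / 2 < z.re := hz
      rw [norm_neg, norm_mul, norm_cexp_aux, Complex.norm_real, Real.norm_of_nonneg (by positivity)]
      gcongr
    · refine (ae_restrict_iff' measurableSet_Ioi).2 (ae_of_all _ fun w hw z hz => ?_)
      have hw' : (0:ℝ) < w := hw
      have h1 : HasDerivAt (fun z : ℂ => -(z * w)) (-(1 * (w : ℂ))) z :=
        ((hasDerivAt_id z).mul_const (w : ℂ)).neg
      have h2 := (h1.cexp).const_mul ((w ^ lam : ℝ) : ℂ)
      refine h2.congr_deriv ?_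
      rw [Real.rpow_add_one hw'.ne']
      push_cast
      ring
  have hgd : DifferentiableOn ℂ g U := by
    intro z0 hz0
    have hz0' : 0 < z0.re := hz0
    have hne : z0 ≠ 0 := by rintro rfl; simp at hz0'
    refine DifferentiableAt.differentiableWithinAt ?_
    refine DifferentiableAt.mul_const ?_ _
    refine DifferentiableAt.cpow_const ?_ ?_
    · exact (differentiableAt_const _).div differentiableAt_id hne
    · left
      rw [one_div, Complex.inv_re]
      have := Complex.normSq_pos.2 hne
      positivity
  have h1 : (1 : ℂ) ∈ U := by simp [hU]
  have hpre : IsPreconnected U := (convex_halfSpace_re_gt 0).isPreconnected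
  have hreal : ∀ r : ℝ, 0 < r → f r = g r := by
    intro r hr
    have := Complex.integral_cpow_mul_exp_neg_mul_Ioi (a := (lam : ℂ) + 1) (r := r)
      (by simp; linarith) hr
    simp only [hf, hg]
    rw [← this]
    refine setIntegral_congr_fun measurableSet_Ioi fun w hw => ?_
    have hw' : (0:ℝ) < w := hw
    simp only [add_sub_cancel_right]
    rw [Complex.ofReal_cpow hw'.le]
  have hfreq : ∃ᶠ z in 𝓝[≠] (1 : ℂ), f z = g z := by
    have ht : Tendsto (fun n : ℕ => ((1 + 1 / ((n : ℝ) + 1) : ℝ) : ℂ)) atTop (𝓝[≠] (1 : ℂ)) := by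
      refine tendsto_nhdsWithin_iff.2 ⟨?_, Eventually.of_forall fun n => ?_⟩
      · have h3 : Tendsto (fun n : ℕ => (1 + 1 / ((n : ℝ) + 1) : ℝ)) atTop (𝓝 (1 + 0)) :=
          tendsto_const_nhds.add tendsto_one_div_add_atTop_nhds_zero_nat
        rw [add_zero] at h3
        exact (Complex.continuous_ofReal.tendsto' 1 1 (by simp)).comp h3
      · have h4 : (0:ℝ) < 1 / ((n : ℝ) + 1) := by positivity
        intro h5
        have h6 : ((1 + 1 / ((n : ℝ) + 1) : ℝ) : ℂ) = ((1 : ℝ) : ℂ) := by simpa using h5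
        have h7 := Complex.ofReal_injective h6
        linarith
    refine ht.frequently (Frequently.of_forall fun n => hreal _ (by positivity))
  exact (hfd.analyticOnNhd hUo).eqOn_of_preconnected_of_frequently_eq (hgd.analyticOnNhd hUo)
    hpre h1 hfreq hz

/-- Weighted integrability of the Fourier transform. -/
lemma ft_integrable {lam : ℝ} (hlam : 0 < lam) (Ψ : ℝ → ℝ) (hΨ : ContDiff ℝ (⊤ : ℕ∞) Ψ)
    (hc : HasCompactSupport Ψ) (y : ℝ) :
    Continuous (FT1R Ψ) ∧
    IntegrableOn (fun w : ℝ => w ^ lam * ‖FT1R Ψ (w - y)‖) (Set.Ioi 0) := by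
  have hΨC : ContDiff ℝ (⊤ : ℕ∞) (fun s => (Ψ s : ℂ)) := Complex.ofRealCLM.contDiff.comp hΨ
  have hcC : HasCompactSupport (fun s => (Ψ s : ℂ)) := hc.comp_left (g := fun x : ℝ => (x : ℂ)) (by simp)
  set f : SchwartzMap ℝ ℂ := hcC.toSchwartzMap hΨC with hf
  set g : SchwartzMap ℝ ℂ := FourierTransform.fourier f with hg
  have hFT : ∀ r, FT1R Ψ r = g ((2 * Real.pi)⁻¹ * r) := by
    intro r
    rw [hg, SchwartzMap.fourier_coe, Real.fourier_eq']
    simp only [FT1R, FT1]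
    congr 1
    funext s
    rw [smul_eq_mul, mul_comm]
    congr 2
    simp
    have : (Real.pi : ℂ) ≠ 0 := by exact_mod_cast Real.pi_ne_zero
    field_simp
  have hcont : Continuous (FT1R Ψ) := by
    have : FT1R Ψ = fun r => g ((2 * Real.pi)⁻¹ * r) := funext hFT
    rw [this]
    exact g.continuous.comp (by fun_prop)
  refine ⟨hcont, ?_⟩
  have hk : ∀ k : ℕ, Integrable (fun w : ℝ => ‖w - y‖ ^ k * ‖FT1R Ψ (w - y)‖) := by
    intro k
    have h1 := g.integrable_pow_mul volume k
    have h2 := (h1.comp_mul_left' (R := (2 * Real.pi)⁻¹) (by positivity))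
    have h3 := (h2.const_mul ((2 * Real.pi) ^ k)).comp_sub_right y
    refine h3.congr (ae_of_all _ fun w => ?_)
    simp only
    rw [hFT, norm_mul, norm_inv, Real.norm_of_nonneg (by positivity : 0 ≤ 2 * Real.pi),
      ← mul_assoc, ← mul_pow, mul_inv_cancel_left₀ (by positivity)]
  obtain ⟨N, hN⟩ := exists_nat_ge lam
  have hbd := (((hk 0).const_mul ((1 + |y|) ^ N)).add (hk N)).const_mul (2 ^ N)
  refine (hbd.integrableOn (s := Set.Ioi 0)).mono' ?_ ?_
  · have : Continuous (fun w : ℝ => w ^ lam) := Real.continuous_rpow_const hlam.le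
    have h2 : Continuous (fun w : ℝ => w ^ lam * ‖FT1R Ψ (w - y)‖) := by fun_prop
    exact h2.aestronglyMeasurable
  · refine (ae_restrict_iff' measurableSet_Ioi).2 (ae_of_all _ fun w hw => ?_)
    have hw' : (0:ℝ) < w := hw
    rw [Real.norm_of_nonneg (by positivity)]
    have h1 : w ^ lam ≤ 2 ^ N * ((1 + |y|) ^ N + ‖w - y‖ ^ N) := by
      calc w ^ lam ≤ (1 + w) ^ lam := by gcongr; linarith
        _ ≤ (1 + w) ^ (N : ℝ) := Real.rpow_le_rpow_of_exponent_le (by linarith) hN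
        _ = (1 + w) ^ N := Real.rpow_natCast _ _
        _ ≤ ((1 + |y|) + ‖w - y‖) ^ N := by
            refine pow_le_pow_left₀ (by linarith) ?_ N
            rw [Real.norm_eq_abs]
            linarith [le_abs_self (w - y), le_abs_self y]
        _ ≤ 2 ^ (N - 1) * ((1 + |y|) ^ N + ‖w - y‖ ^ N) :=
            add_pow_le (by positivity) (by positivity) _
        _ ≤ _ := by
            gcongr
            · norm_num
            · omega
    calc _ ≤ 2 ^ N * ((1 + |y|) ^ N + ‖w - y‖ ^ N) * ‖FT1R Ψ (w - y)‖ := by gcongr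
      _ = _ := by simp; ring

/-- The one-dimensional symbol. -/
def mSym (lam : ℝ) (Ψ : ℝ → ℝ) (s : ℝ) : ℂ :=
  (Ψ s : ℂ) * ((1 / (Complex.I * s)) ^ ((lam : ℂ) + 1) * Complex.Gamma ((lam : ℂ) + 1))

lemma mSym_smooth {lam : ℝ} (Ψ : ℝ → ℝ) (hΨ : ContDiff ℝ (⊤ : ℕ∞) Ψ)
    (h0 : ∀ s, |s| ≤ 1 / 2 → Ψ s = 0) : ContDiff ℝ (⊤ : ℕ∞) (mSym lam Ψ) := by
  rw [contDiff_iff_contDiffAt]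
  intro s
  by_cases hs : s = 0
  · have : mSym lam Ψ =ᶠ[𝓝 s] fun _ => 0 := by
      have : {s : ℝ | |s| < 1 / 2} ∈ 𝓝 s :=
        (isOpen_lt continuous_abs continuous_const).mem_nhds (by simp [hs])
      filter_upwards [this] with r hr
      have hr' : |r| < 1 / 2 := hr
      simp [mSym, h0 r hr'.le]
    exact contDiffAt_const.congr_of_eventuallyEq this
  · have hΨC : ContDiff ℝ (⊤ : ℕ∞) (fun s => (Ψ s : ℂ)) := Complex.ofRealCLM.contDiff.comp hΨ
    refine hΨC.contDiffAt.mul (ContDiffAt.mul ?_ contDiffAt_const)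
    have h1 : ContDiffAt ℝ (⊤ : ℕ∞) (fun s : ℝ => 1 / (Complex.I * (s : ℂ))) s := by
      simp only [one_div]
      refine ContDiffAt.inv (contDiffAt_const.mul Complex.ofRealCLM.contDiff.contDiffAt) ?_
      simp [hs]
    have hmem : 1 / (Complex.I * (s : ℂ)) ∈ Complex.slitPlane := by
      right
      simp [hs]
    have h2 : ContDiffAt ℝ (⊤ : ℕ∞) (fun z : ℂ => z ^ ((lam : ℂ) + 1)) (1 / (Complex.I * (s : ℂ))) := by
      have h3 : AnalyticAt ℂ (fun z : ℂ => z ^ ((lam : ℂ) + 1)) (1 / (Complex.I * (s : ℂ))) :=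
        analyticAt_id.cpow analyticAt_const hmem
      exact (h3.contDiffAt).restrict_scalars ℝ
    exact h2.comp s h1

lemma one_d_rep {lam : ℝ} (hlam : 0 < lam) (Ψ : ℝ → ℝ) (hΨ : ContDiff ℝ (⊤ : ℕ∞) Ψ)
    (hc : HasCompactSupport Ψ) (h0 : ∀ s, |s| ≤ 1 / 2 → Ψ s = 0) (y : ℝ) :
    ∫ w in Set.Ioi (0 : ℝ), ((w ^ lam : ℝ) : ℂ) * FT1R Ψ (w - y) =
      ∫ s : ℝ, mSym lam Ψ s * Complex.exp (Complex.I * (s * y : ℝ)) := by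
  obtain ⟨hcont, hintg⟩ := ft_integrable hlam Ψ hΨ hc y
  have hpw : Continuous (fun w : ℝ => w ^ lam) := Real.continuous_rpow_const hlam.le
  set εs : ℕ → ℝ := fun n => 1 / ((n : ℝ) + 1) with hεs
  have hεpos : ∀ n, 0 < εs n := fun n => by simp only [hεs]; positivity
  have hεt : Tendsto εs atTop (𝓝 0) := tendsto_one_div_add_atTop_nhds_zero_nat
  have hL : Tendsto (fun n => ∫ w in Set.Ioi (0 : ℝ),
      Real.exp (-(εs n * w)) * (((w ^ lam : ℝ) : ℂ) * FT1R Ψ (w - y))) atTop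
      (𝓝 (∫ w in Set.Ioi (0 : ℝ), ((w ^ lam : ℝ) : ℂ) * FT1R Ψ (w - y))) := by
    refine tendsto_integral_of_dominated_convergence
      (fun w => w ^ lam * ‖FT1R Ψ (w - y)‖) ?_ hintg ?_ ?_
    · intro n
      have : Continuous (fun w : ℝ => (Real.exp (-(εs n * w)) : ℂ) *
        (((w ^ lam : ℝ) : ℂ) * FT1R Ψ (w - y))) := by fun_prop
      exact this.aestronglyMeasurable
    · intro n
      refine (ae_restrict_iff' measurableSet_Ioi).2 (ae_of_all _ fun w hw => ?_)
      have hw' : (0:ℝ) < w := hw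
      rw [norm_mul, norm_mul, Complex.norm_real, Complex.norm_real,
        Real.norm_of_nonneg (Real.exp_pos _).le,
        Real.norm_of_nonneg (by positivity : 0 ≤ w ^ lam)]
      refine mul_le_of_le_one_left (by positivity) ?_
      rw [Real.exp_le_one_iff]
      have := mul_pos (hεpos n) hw'
      linarith
    · refine ae_of_all _ fun w => ?_
      have h1 : Tendsto (fun n => (Real.exp (-(εs n * w)) : ℂ)) atTop (𝓝 ((1 : ℝ) : ℂ)) := by
        have h3 : Continuous (fun ε : ℝ => (Real.exp (-(ε * w)) : ℂ)) := by fun_prop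
        exact (h3.tendsto' 0 _ (by simp)).comp hεt
      simpa using h1.mul_const (((w ^ lam : ℝ) : ℂ) * FT1R Ψ (w - y))
  have hR : Tendsto (fun n => ∫ s : ℝ, (Ψ s : ℂ) * ((1 / (εs n + Complex.I * s)) ^ ((lam : ℂ) + 1) *
        Complex.Gamma ((lam : ℂ) + 1)) * Complex.exp (Complex.I * (s * y : ℝ))) atTop
      (𝓝 (∫ s : ℝ, mSym lam Ψ s * Complex.exp (Complex.I * (s * y : ℝ)))) := by
    have hre : ∀ n (s : ℝ), 0 < (1 / (εs n + Complex.I * s) : ℂ).re := by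
      intro n s
      have hne : (εs n + Complex.I * s : ℂ) ≠ 0 := by
        intro h
        have := congrArg Complex.re h
        simp at this
        exact (hεpos n).ne' this
      rw [one_div, Complex.inv_re]
      have := Complex.normSq_pos.2 hne
      have h2 := hεpos n
      simp only [Complex.add_re, Complex.ofReal_re, Complex.mul_re, Complex.I_re, zero_mul,
        Complex.ofReal_im, mul_zero, sub_zero, add_zero]
      positivity
    have hcs : ∀ n, Continuous (fun s : ℝ => (1 / (εs n + Complex.I * s) : ℂ)) := by
      intro n
      refine continuous_const.div (by fun_prop) ?_
      intro s h
      have := hre n s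
      simp [h] at this
    have hcp : ∀ n, Continuous (fun s : ℝ => (1 / (εs n + Complex.I * s) : ℂ) ^ ((lam : ℂ) + 1)) := by
      intro n
      refine Continuous.cpow (hcs n) continuous_const fun s => ?_
      exact Or.inl (hre n s)
    refine tendsto_integral_of_dominated_convergence
      (fun s => ‖Ψ s‖ * (2 ^ (lam + 1) * ‖Complex.Gamma ((lam : ℂ) + 1)‖)) ?_ ?_ ?_ ?_
    · intro n
      have h1 := hcp n
      have h2 := hΨ.continuous
      exact Continuous.aestronglyMeasurable (by fun_prop)
    · exact ((hΨ.continuous.integrable_of_hasCompactSupport hc).norm).mul_const _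
    · intro n
      refine ae_of_all _ fun s => ?_
      by_cases hs : |s| ≤ 1 / 2
      · simp [h0 s hs]
      · push Not at hs
        have he : ‖Complex.exp (Complex.I * (s * y : ℝ))‖ = 1 := by
          rw [mul_comm, Complex.norm_exp_ofReal_mul_I]
        rw [norm_mul, norm_mul, norm_mul, Complex.norm_real, he, mul_one, mul_comm Complex.I]
        gcongr
        have hne : (1 / (εs n + s * Complex.I) : ℂ) ≠ 0 := by
          intro h
          have := hre n s
          rw [mul_comm Complex.I, h] at this
          simp at this
        have h2 : ‖(1 / (εs n + s * Complex.I) : ℂ)‖ ≤ 2 := by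
          rw [norm_div, norm_one, div_le_iff₀]
          · have := Complex.abs_im_le_norm (εs n + s * Complex.I : ℂ)
            simp at this
            linarith
          · rw [norm_pos_iff]
            intro h
            simp [h] at hne
        have h3 : ((lam : ℂ) + 1) = ((lam + 1 : ℝ) : ℂ) := by push_cast; rfl
        rw [h3, Complex.norm_cpow_real]
        gcongr
    · refine ae_of_all _ fun s => ?_
      by_cases hs : |s| ≤ 1 / 2
      · simp [h0 s hs, mSym]
      · have hs0 : s ≠ 0 := by rintro rfl; simp at hs
        refine Tendsto.mul_const _ (Tendsto.const_mul _ (Tendsto.mul_const _ ?_))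
        have hmem : 1 / (Complex.I * (s : ℂ)) ∈ Complex.slitPlane := by
          right
          simp [hs0]
        have h5 : ContinuousAt (fun z : ℂ => z ^ ((lam : ℂ) + 1)) (1 / (Complex.I * (s : ℂ))) :=
          (analyticAt_id.cpow analyticAt_const hmem).continuousAt
        refine h5.tendsto.comp ?_
        have h6 : ContinuousAt (fun ε : ℝ => (1 / (ε + Complex.I * s) : ℂ)) 0 := by
          refine continuousAt_const.div (by fun_prop) (by simp [hs0])
        have h7 := h6.tendsto.comp hεt
        simpa [Function.comp_def] using h7
  refine tendsto_nhds_unique hL ?_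
  refine hR.congr fun n => ?_
  symm
  have hε := hεpos n
  have e1 : ∀ w : ℝ, (Real.exp (-(εs n * w)) : ℂ) * (((w ^ lam : ℝ) : ℂ) * FT1R Ψ (w - y)) =
      ∫ s : ℝ, (Ψ s : ℂ) * Complex.exp (Complex.I * (s * y : ℝ)) *
        (((w ^ lam : ℝ) : ℂ) * Complex.exp (-((εs n + Complex.I * s) * w))) := by
    intro w
    simp only [FT1R, FT1]
    rw [← mul_assoc, ← integral_const_mul]
    congr 1
    funext s
    have e2 : Complex.exp (-(Complex.I * s * ((w - y : ℝ) : ℂ))) =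
      Complex.exp (Complex.I * (s * y : ℝ)) * Complex.exp (-(Complex.I * s * w)) := by
      rw [← Complex.exp_add]
      congr 1
      push_cast
      ring
    have e3 : Complex.exp (-((εs n + Complex.I * s) * w)) = (Real.exp (-(εs n * w)) : ℂ) *
        Complex.exp (-(Complex.I * s * w)) := by
      rw [Complex.ofReal_exp, ← Complex.exp_add]
      congr 1
      push_cast
      ring
    rw [e2, e3]
    ring
  simp_rw [e1]
  rw [integral_integral_swap]
  · congr 1
    funext s
    rw [integral_const_mul, gamma_complex hlam _ (by simp [hε])]
    ring
  · have hi1 : Integrable (fun s : ℝ => (Ψ s : ℂ)) :=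
      (hΨ.continuous.integrable_of_hasCompactSupport hc).ofReal
    have hi2 := Integrable.mul_prod (intOn_rpow_exp hlam hε).norm hi1.norm
    refine Integrable.mono' hi2 ?_ (ae_of_all _ ?_)
    · have h2 := hΨ.continuous
      refine Continuous.aestronglyMeasurable ?_
      have : Continuous (fun p : ℝ × ℝ => p.1 ^ lam) := hpw.comp continuous_fst
      unfold Function.uncurry
      fun_prop
    · rintro ⟨w, s⟩
      simp only [Function.uncurry]
      have he : ‖Complex.exp (Complex.I * (s * y : ℝ))‖ = 1 := by
        rw [mul_comm, Complex.norm_exp_ofReal_mul_I]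
      rw [norm_mul, norm_mul, norm_mul, norm_cexp_aux, he]
      simp [mul_comm]

lemma one_d_scaled {lam : ℝ} (hlam : 0 < lam) (Ψ : ℝ → ℝ) (T : ℝ) (hT : 0 < T) (ϱ : ℝ) :
    ∫ u : ℝ, ((max (1 - u) 0) ^ lam : ℝ) • (T • FT1R Ψ (T * (ϱ - u))) =
      ((T ^ (-lam) : ℝ) : ℂ) *
        ∫ w in Set.Ioi (0 : ℝ), ((w ^ lam : ℝ) : ℂ) * FT1R Ψ (w - T * (1 - ϱ)) := by
  set G : ℝ → ℂ := fun w => (((max w 0) ^ lam : ℝ) : ℂ) * FT1R Ψ (w - T * (1 - ϱ)) with hG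
  have h1 : ∀ u : ℝ, ((max (1 - u) 0) ^ lam : ℝ) • (T • FT1R Ψ (T * (ϱ - u))) =
      ((T ^ (-lam) * T : ℝ) : ℂ) * G (T * (1 - u)) := by
    intro u
    simp only [hG]
    have e1 : max (T * (1 - u)) 0 = T * max (1 - u) 0 := by
      rw [mul_max_of_nonneg _ _ hT.le, mul_zero]
    have e2 : T * (1 - u) - T * (1 - ϱ) = T * (ϱ - u) := by ring
    rw [e1, e2, Real.mul_rpow hT.le (le_max_right _ _), Real.rpow_neg hT.le]
    have e3 : ((T ^ lam : ℝ) : ℂ) ≠ 0 := by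
      exact_mod_cast (Real.rpow_pos_of_pos hT lam).ne'
    simp only [Complex.real_smul]
    push_cast
    field_simp
  simp_rw [h1]
  rw [integral_const_mul, integral_sub_left_eq_self (fun v => G (T * v)) volume 1,
    Measure.integral_comp_mul_left]
  have h2 : ∫ w in Set.Ioi (0 : ℝ), ((w ^ lam : ℝ) : ℂ) * FT1R Ψ (w - T * (1 - ϱ)) = ∫ w, G w := by
    rw [← setIntegral_eq_integral_of_forall_compl_eq_zero (s := Set.Ioi (0 : ℝ)) (f := G)]
    · refine setIntegral_congr_fun measurableSet_Ioi fun w hw => ?_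
      have hw' : (0:ℝ) < w := hw
      simp only [hG]
      rw [max_eq_left hw'.le]
    · intro w hw
      have hw' : w ≤ 0 := not_lt.1 hw
      simp only [hG]
      rw [max_eq_right hw', Real.zero_rpow hlam.ne']
      simp
  rw [h2, abs_of_pos (inv_pos.2 hT), Complex.real_smul]
  have e4 : (T : ℂ) ≠ 0 := by exact_mod_cast hT.ne'
  push_cast
  field_simp

end OneD

section Geometry

instance prodHaar (d : ℕ) : (volume : Measure (Euc d × ℝ)).IsAddHaarMeasure :=
  inferInstanceAs (((volume : Measure (Euc d)).prod (volume : Measure ℝ)).IsAddHaarMeasure)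

variable {d : ℕ} {Ω : Set (Euc d)} {ρ : Euc d → ℝ}

lemma rho_cda (hρ : IsMinkowskiGauge d Ω ρ) {ξ : Euc d} (hξ : ξ ≠ 0) :
    ContDiffAt ℝ (⊤ : ℕ∞) ρ ξ :=
  hρ.smooth.contDiffAt (isOpen_compl_singleton.mem_nhds hξ)

lemma rho_hom (hρ : IsMinkowskiGauge d Ω ρ) {t : ℝ} (ht : 0 ≤ t) (ξ : Euc d) :
    ρ (t • ξ) = t * ρ ξ := by
  rw [hρ.eq_gauge, gauge_smul_of_nonneg ht, smul_eq_mul]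

lemma rho_cont (hρ : IsMinkowskiGauge d Ω ρ) : Continuous ρ := by
  rw [hρ.eq_gauge]
  exact continuous_gauge hρ.convex (hρ.isOpen.mem_nhds hρ.zero_mem)

lemma rho_deriv_hom (hρ : IsMinkowskiGauge d Ω ρ) {ξ : Euc d} (hξ : ξ ≠ 0) {t : ℝ} (ht : 0 < t) :
    fderiv ℝ ρ (t • ξ) = fderiv ℝ ρ ξ := by
  have hne : t • ξ ≠ 0 := smul_ne_zero ht.ne' hξ
  have h1 : HasFDerivAt ρ (fderiv ℝ ρ (t • ξ)) (t • ξ) :=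
    ((rho_cda hρ hne).differentiableAt (by simp)).hasFDerivAt
  have h2 : HasFDerivAt ρ (fderiv ℝ ρ ξ) ξ :=
    ((rho_cda hρ hξ).differentiableAt (by simp)).hasFDerivAt
  have h3 : HasFDerivAt (fun x : Euc d => t • x) (t • ContinuousLinearMap.id ℝ (Euc d)) ξ :=
    (hasFDerivAt_id ξ).const_smul t
  have h4 := h1.comp ξ h3
  have h5 : ρ ∘ (fun x : Euc d => t • x) = fun x => t * ρ x := by
    funext x
    exact rho_hom hρ ht.le x
  rw [h5] at h4
  have h6 := h4.unique (h2.const_mul t)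
  ext v
  have h7 := congrArg (fun f => f v) h6
  simp only [ContinuousLinearMap.comp_apply, ContinuousLinearMap.smul_apply,
    ContinuousLinearMap.id_apply, map_smul, smul_eq_mul] at h7
  exact mul_left_cancel₀ ht.ne' h7

lemma rho_euler (hρ : IsMinkowskiGauge d Ω ρ) {ξ : Euc d} (hξ : ξ ≠ 0) :
    fderiv ℝ ρ ξ ξ = ρ ξ := by
  have h2 : HasFDerivAt ρ (fderiv ℝ ρ ξ) ((1 : ℝ) • ξ) := by
    rw [one_smul]
    exact ((rho_cda hρ hξ).differentiableAt (by simp)).hasFDerivAt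
  have h3 : HasDerivAt (fun t : ℝ => t • ξ) ((1 : ℝ) • ξ) 1 := (hasDerivAt_id (1 : ℝ)).smul_const ξ
  have h4 := h2.comp_hasDerivAt 1 h3
  have h5 : HasDerivAt (fun t : ℝ => t * ρ ξ) (1 * ρ ξ) 1 := (hasDerivAt_id (1 : ℝ)).mul_const _
  have h6 : ρ ∘ (fun t : ℝ => t • ξ) =ᶠ[𝓝 1] fun t : ℝ => t * ρ ξ := by
    filter_upwards [lt_mem_nhds (zero_lt_one : (0:ℝ) < 1)] with t ht
    exact rho_hom hρ ht.le ξ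
  have h7 := h4.unique (h5.congr_of_eventuallyEq h6)
  simpa using h7

lemma rho_cda1 (hρ : IsMinkowskiGauge d Ω ρ) {ξ : Euc d} (hξ : ξ ≠ 0) :
    ContDiffAt ℝ (⊤ : ℕ∞) (fderiv ℝ ρ) ξ :=
  (rho_cda hρ hξ).fderiv_right (by simp)

lemma rho_hess_self (hρ : IsMinkowskiGauge d Ω ρ) {ξ : Euc d} (hξ : ξ ≠ 0) :
    fderiv ℝ (fderiv ℝ ρ) ξ ξ = 0 := by
  have h2 : HasFDerivAt (fderiv ℝ ρ) (fderiv ℝ (fderiv ℝ ρ) ξ) ((1 : ℝ) • ξ) := by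
    rw [one_smul]
    exact ((rho_cda1 hρ hξ).differentiableAt (by simp)).hasFDerivAt
  have h3 : HasDerivAt (fun t : ℝ => t • ξ) ((1 : ℝ) • ξ) 1 := (hasDerivAt_id (1 : ℝ)).smul_const ξ
  have h4 := h2.comp_hasDerivAt 1 h3
  have h6 : (fderiv ℝ ρ) ∘ (fun t : ℝ => t • ξ) =ᶠ[𝓝 1] fun _ : ℝ => fderiv ℝ ρ ξ := by
    filter_upwards [lt_mem_nhds (zero_lt_one : (0:ℝ) < 1)] with t ht
    exact rho_deriv_hom hρ hξ ht
  have h7 := h4.unique ((hasDerivAt_const (1:ℝ) (fderiv ℝ ρ ξ)).congr_of_eventuallyEq h6)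
  simpa using h7

lemma two_le_inf : (2 : WithTop ℕ∞) ≤ ((⊤ : ℕ∞) : WithTop ℕ∞) := by
  have : ((2 : ℕ∞) : WithTop ℕ∞) ≤ ((⊤ : ℕ∞) : WithTop ℕ∞) := WithTop.coe_le_coe.2 le_top
  exact this

lemma rho_hess_symm (hρ : IsMinkowskiGauge d Ω ρ) {ξ : Euc d} (hξ : ξ ≠ 0) (v w : Euc d) :
    fderiv ℝ (fderiv ℝ ρ) ξ v w = fderiv ℝ (fderiv ℝ ρ) ξ w v :=
  ((rho_cda hρ hξ).isSymmSndFDerivAt (by simp; exact two_le_inf)) v w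

lemma rho_ker (hd : 2 ≤ d) (hρ : IsMinkowskiGauge d Ω ρ) (hcurv : HasNonvanishingCurvature d ρ)
    {ξ : Euc d} (hξ : ξ ≠ 0) {v : Euc d} (hv : fderiv ℝ (fderiv ℝ ρ) ξ v = 0) :
    ∃ c : ℝ, v = c • ξ := by
  set A : Euc d →ₗ[ℝ] (Euc d →L[ℝ] ℝ) :=
    ((fderiv ℝ (fderiv ℝ ρ) ξ : Euc d →L[ℝ] (Euc d →L[ℝ] ℝ)) : Euc d →ₗ[ℝ] (Euc d →L[ℝ] ℝ))
    with hA
  have hr : Module.finrank ℝ (LinearMap.range A) = d - 1 := by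
    have := hcurv ξ hξ
    exact Module.finrank_eq_of_rank_eq this
  have hrn := LinearMap.finrank_range_add_finrank_ker A
  rw [hr, finrank_euclideanSpace_fin] at hrn
  have hk : Module.finrank ℝ (LinearMap.ker A) = 1 := by omega
  have hξk : ξ ∈ LinearMap.ker A := rho_hess_self hρ hξ
  have hvk : v ∈ LinearMap.ker A := hv
  obtain ⟨c, hc⟩ := (finrank_eq_one_iff_of_nonzero' (⟨ξ, hξk⟩ : LinearMap.ker A)
    (by simpa [Subtype.ext_iff] using hξ)).1 hk ⟨v, hvk⟩
  exact ⟨c, by simpa using (congrArg Subtype.val hc).symm⟩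

/-- The phase function. -/
def phs (ρ : Euc d → ℝ) (p : Euc d × ℝ) : ℝ := p.2 * (1 - ρ p.1)

lemma phs_fderiv (hρ : IsMinkowskiGauge d Ω ρ) {p : Euc d × ℝ} (hp : p.1 ≠ 0) (b : Euc d × ℝ) :
    fderiv ℝ (phs ρ) p b = b.2 * (1 - ρ p.1) - p.2 * fderiv ℝ ρ p.1 b.1 := by
  have h1 : HasFDerivAt ρ (fderiv ℝ ρ p.1) p.1 :=
    ((rho_cda hρ hp).differentiableAt (by simp)).hasFDerivAt
  have h2 := (h1.comp p hasFDerivAt_fst).const_sub 1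
  have h3 : HasFDerivAt (phs ρ) _ p := hasFDerivAt_snd.mul h2
  rw [h3.fderiv]
  simp
  ring

lemma phs_cda (hρ : IsMinkowskiGauge d Ω ρ) {p : Euc d × ℝ} (hp : p.1 ≠ 0) :
    ContDiffAt ℝ (⊤ : ℕ∞) (phs ρ) p :=
  contDiffAt_snd.mul (contDiffAt_const.sub ((rho_cda hρ hp).comp p contDiffAt_fst))

lemma phs_hess (hρ : IsMinkowskiGauge d Ω ρ) {p : Euc d × ℝ} (hp : p.1 ≠ 0) (a b : Euc d × ℝ) :
    fderiv ℝ (fderiv ℝ (phs ρ)) p a b = -(b.2 * fderiv ℝ ρ p.1 a.1) - a.2 * fderiv ℝ ρ p.1 b.1 -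
      p.2 * fderiv ℝ (fderiv ℝ ρ) p.1 a.1 b.1 := by
  have hd1 : DifferentiableAt ℝ (fderiv ℝ (phs ρ)) p :=
    ((phs_cda hρ hp).fderiv_right (m := (⊤ : ℕ∞)) (by simp)).differentiableAt (by simp)
  have e1 : fderiv ℝ (fun q => fderiv ℝ (phs ρ) q b) p a = fderiv ℝ (fderiv ℝ (phs ρ)) p a b := by
    have := (hd1.hasFDerivAt.clm_apply (hasFDerivAt_const b p)).fderiv
    rw [this]
    simp
  rw [← e1]
  have e2 : (fun q => fderiv ℝ (phs ρ) q b) =ᶠ[𝓝 p]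
      fun q => b.2 * (1 - ρ q.1) - q.2 * fderiv ℝ ρ q.1 b.1 := by
    have : {q : Euc d × ℝ | q.1 ≠ 0} ∈ 𝓝 p :=
      (isOpen_compl_singleton.preimage continuous_fst).mem_nhds hp
    filter_upwards [this] with q hq using phs_fderiv hρ hq b
  rw [e2.fderiv_eq]
  have h1 : HasFDerivAt ρ (fderiv ℝ ρ p.1) p.1 :=
    ((rho_cda hρ hp).differentiableAt (by simp)).hasFDerivAt
  have h2 : HasFDerivAt (fderiv ℝ ρ) (fderiv ℝ (fderiv ℝ ρ) p.1) p.1 :=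
    ((rho_cda1 hρ hp).differentiableAt (by simp)).hasFDerivAt
  have h3 := ((h1.comp p hasFDerivAt_fst).const_sub 1).const_mul b.2
  have h4 := (h2.comp p hasFDerivAt_fst).clm_apply (hasFDerivAt_const b.1 p)
  have h5 := h3.sub (hasFDerivAt_snd.mul h4)
  have h6 : fderiv ℝ (fun q : Euc d × ℝ => b.2 * (1 - ρ q.1) - q.2 * fderiv ℝ ρ q.1 b.1) p = _ :=
    h5.fderiv
  rw [h6]
  simp
  ring

lemma phs_inj (hd : 2 ≤ d) (hρ : IsMinkowskiGauge d Ω ρ) (hcurv : HasNonvanishingCurvature d ρ)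
    {p : Euc d × ℝ} (hp : p.1 ≠ 0) (hp2 : p.2 ≠ 0) :
    Function.Injective (fderiv ℝ (fderiv ℝ (phs ρ)) p) := by
  rw [injective_iff_map_eq_zero]
  rintro ⟨v, w⟩ h
  have hb : ∀ b : Euc d × ℝ, -(b.2 * fderiv ℝ ρ p.1 v) - w * fderiv ℝ ρ p.1 b.1 -
      p.2 * fderiv ℝ (fderiv ℝ ρ) p.1 v b.1 = 0 := by
    intro b
    have := phs_hess hρ hp (v, w) b
    rw [h] at this
    simpa using this.symm
  have h1 : fderiv ℝ ρ p.1 v = 0 := by simpa using hb (0, 1)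
  have hpos := hρ.pos _ hp
  have h2 : w = 0 := by
    have := hb (p.1, 0)
    simp only [zero_mul, neg_zero, zero_sub] at this
    rw [rho_euler hρ hp, rho_hess_symm hρ hp, rho_hess_self hρ hp] at this
    simpa [hpos.ne'] using this
  have h3 : fderiv ℝ (fderiv ℝ ρ) p.1 v = 0 := by
    ext b
    have := hb (b, 0)
    simpa [h2, hp2] using this
  obtain ⟨c, rfl⟩ := rho_ker hd hρ hcurv hp h3
  rw [map_smul, rho_euler hρ hp, smul_eq_mul] at h1
  have hc : c = 0 := by simpa [hpos.ne'] using h1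
  simp [hc, h2]

lemma chi_rho_smooth (hρ : IsMinkowskiGauge d Ω ρ) {χ : ℝ → ℝ} (hχ : ContDiff ℝ (⊤ : ℕ∞) χ)
    (hs : Function.support χ ⊆ Set.Ioo (1/2 : ℝ) 2) :
    ContDiff ℝ (⊤ : ℕ∞) (fun ξ => χ (ρ ξ)) := by
  rw [contDiff_iff_contDiffAt]
  intro ξ
  by_cases hξ : ξ = 0
  · have h0 : ρ ξ = 0 := by rw [hξ, hρ.eq_gauge, gauge_zero]
    have : {ξ | ρ ξ < 1 / 2} ∈ 𝓝 ξ :=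
      (isOpen_lt (rho_cont hρ) continuous_const).mem_nhds (by simp [h0])
    refine (contDiffAt_const (c := 0)).congr_of_eventuallyEq ?_
    filter_upwards [this] with η hη
    have hη' : ρ η < 1 / 2 := hη
    by_contra h
    have := (hs h).1
    linarith
  · exact hχ.contDiffAt.comp ξ (rho_cda hρ hξ)

lemma rho_compact (hρ : IsMinkowskiGauge d Ω ρ) : IsCompact {ξ | ρ ξ ≤ 2} := by
  refine Metric.isCompact_of_isClosed_isBounded (isClosed_le (rho_cont hρ) continuous_const) ?_
  obtain ⟨R, hR⟩ := hρ.isBounded.subset_closedBall 0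
  refine (Metric.isBounded_closedBall (x := (0 : Euc d)) (r := 4 * R)).subset ?_
  intro ξ hξ
  have hξ' : ρ ξ ≤ 2 := hξ
  have h1 : ρ ((1 / 4 : ℝ) • ξ) < 1 := by
    rw [rho_hom hρ (by norm_num)]
    linarith
  have h2 : (1 / 4 : ℝ) • ξ ∈ Ω := by
    rw [← gauge_lt_one_eq_self_of_isOpen hρ.convex hρ.zero_mem hρ.isOpen]
    rw [hρ.eq_gauge] at h1
    exact h1
  have h3 := hR h2
  rw [mem_closedBall_zero_iff, norm_smul] at h3
  rw [mem_closedBall_zero_iff]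
  norm_num at h3
  linarith

lemma geom_osc (hd : 2 ≤ d) (hρ : IsMinkowskiGauge d Ω ρ) (hcurv : HasNonvanishingCurvature d ρ)
    {χ : ℝ → ℝ} (hχ : ContDiff ℝ (⊤ : ℕ∞) χ)
    (hs : Function.support χ ⊆ Set.Ioo (1/2 : ℝ) 2) (m : ℝ → ℂ) (hm : ContDiff ℝ (⊤ : ℕ∞) m)
    (hm0 : ∀ s, |s| ≤ 1 / 2 → m s = 0) (hm2 : ∀ s, 2 ≤ |s| → m s = 0) :
    OscBound (phs ρ) (fun p : Euc d × ℝ => (χ (ρ p.1) : ℂ) * m p.2) := by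
  set a : Euc d × ℝ → ℂ := fun p => (χ (ρ p.1) : ℂ) * m p.2 with ha
  have has : ContDiff ℝ (⊤ : ℕ∞) a :=
    ((Complex.ofRealCLM.contDiff.comp (chi_rho_smooth hρ hχ hs)).comp contDiff_fst).mul
      (hm.comp contDiff_snd)
  set K : Set (Euc d × ℝ) := {p | ρ p.1 ≤ 2 ∧ |p.2| ≤ 2 ∧ 1 / 2 ≤ ρ p.1 ∧ 1 / 2 ≤ |p.2|} with hK
  have hKcl : IsClosed K := by
    have h1 := rho_cont hρ
    have h2 : Continuous (fun p : Euc d × ℝ => ρ p.1) := by fun_prop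
    have h3 : Continuous (fun p : Euc d × ℝ => |p.2|) := by fun_prop
    exact (isClosed_le h2 continuous_const).inter ((isClosed_le h3 continuous_const).inter
      ((isClosed_le continuous_const h2).inter (isClosed_le continuous_const h3)))
  have hKc : IsCompact K := by
    refine ((rho_compact hρ).prod (isCompact_Icc (a := (-2:ℝ)) (b := 2))).of_isClosed_subset hKcl ?_
    rintro p ⟨h1, h2, -, -⟩
    exact ⟨h1, abs_le.1 h2⟩
  have haK : tsupport a ⊆ K := by
    refine closure_minimal ?_ hKcl
    intro p hp
    have h1 : χ (ρ p.1) ≠ 0 := fun h => hp (by simp [ha, h])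
    have h2 : m p.2 ≠ 0 := fun h => hp (by simp [ha, h])
    have h3 := hs h1
    refine ⟨h3.2.le, ?_, h3.1.le, ?_⟩
    · by_contra h; push Not at h; exact h2 (hm2 _ h.le)
    · by_contra h; push Not at h; exact h2 (hm0 _ h.le)
  have hac : HasCompactSupport a := hKc.of_isClosed_subset (isClosed_tsupport a) haK
  obtain ⟨R, hR⟩ := hKc.isBounded.subset_ball 0
  have hρ0 : ρ 0 = 0 := by rw [hρ.eq_gauge, gauge_zero]
  obtain ⟨κ, hκ, ⟨W, hW, hKW, hκW⟩, hκV⟩ := smooth_cutoff (E := Euc d × ℝ) (K := K)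
    (V := {p : Euc d × ℝ | p.1 ≠ 0} ∩ Metric.ball 0 R) hKcl
    ((isOpen_compl_singleton.preimage continuous_fst).inter Metric.isOpen_ball)
    (fun p hp => ⟨fun h => by
      have := hp.2.2.1
      rw [h, hρ0] at this
      norm_num at this, hR hp⟩)
  have hκc : HasCompactSupport κ :=
    Metric.isCompact_of_isClosed_isBounded (isClosed_tsupport κ)
      (Metric.isBounded_ball.subset (hκV.trans Set.inter_subset_right))
  set φ : Euc d × ℝ → ℝ := fun p => κ p * phs ρ p with hφ
  have hφs : ContDiff ℝ (⊤ : ℕ∞) φ := by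
    rw [contDiff_iff_contDiffAt]
    intro p
    by_cases hp : p ∈ tsupport κ
    · exact hκ.contDiffAt.mul (phs_cda hρ (hκV hp).1)
    · refine (contDiffAt_const (c := 0)).congr_of_eventuallyEq ?_
      filter_upwards [notMem_tsupport_iff_eventuallyEq.1 hp] with q hq
      simp [hφ, hq]
  have hφc : HasCompactSupport φ := hκc.mul_right
  have hosc : OscBound φ a := by
    refine osc_global φ hφs hφc a has hac fun p hp => ?_
    have hpK := haK hp
    have e1 : φ =ᶠ[𝓝 p] phs ρ := by
      filter_upwards [hW.mem_nhds (hKW hpK)] with q hq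
      simp [hφ, hκW q hq]
    rw [e1.fderiv.fderiv_eq]
    refine phs_inj hd hρ hcurv (hκV ?_).1 ?_
    · refine subset_tsupport κ ?_
      simp [hκW p (hKW hpK)]
    · intro h
      have := hpK.2.2.2
      rw [h] at this
      norm_num at this
  obtain ⟨C, hC⟩ := hosc
  refine ⟨C, fun t ht L => ?_⟩
  have := hC t ht L
  convert this using 5
  funext p
  by_cases hp : a p = 0
  · simp [hp]
  · have hpK := haK (subset_tsupport a hp)
    simp [hφ, hκW p (hKW hpK)]

end Geometry

section Assembly

lemma pow_bound {n : ℕ} {lam c J C : ℝ} {k : ℕ} (hc : 0 ≤ c) (hJ : 0 ≤ J)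
    (h : J ^ 2 * ((2 : ℝ) ^ k) ^ (n + 1) ≤ C) :
    c * ((2 : ℝ) ^ k) ^ (-lam) * J ≤ c * Real.sqrt C * (2 : ℝ) ^ (lam + ((n : ℝ) + 1) / 2) *
      (2 : ℝ) ^ (-((k + 1 : ℕ) : ℝ) * (lam + ((n : ℝ) + 1) / 2)) := by
  set S : ℝ := (2 : ℝ) ^ (-(k : ℝ) * (((n : ℝ) + 1) / 2)) with hS
  have hSp : 0 < S := by positivity
  have h1 : J ≤ Real.sqrt C * S := by
    have h2 : (J / S) ^ 2 ≤ C := by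
      refine le_trans (le_of_eq ?_) h
      have h3 : (S ^ 2)⁻¹ = ((2 : ℝ) ^ k) ^ (n + 1) := by
        rw [hS, ← Real.rpow_natCast, ← Real.rpow_mul (by norm_num), ← Real.rpow_neg (by norm_num),
          ← pow_mul, ← Real.rpow_natCast]
        congr 1
        push_cast
        ring
      rw [div_pow, ← h3, div_eq_mul_inv]
    have h4 := Real.le_sqrt_of_sq_le h2
    rwa [div_le_iff₀ hSp] at h4
  calc c * ((2 : ℝ) ^ k) ^ (-lam) * J ≤ c * ((2 : ℝ) ^ k) ^ (-lam) * (Real.sqrt C * S) := by gcongr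
    _ = c * Real.sqrt C * (((2 : ℝ) ^ k) ^ (-lam) * S) := by ring
    _ = _ := by
      rw [mul_assoc (c * Real.sqrt C), ← Real.rpow_add (by norm_num), hS, ← Real.rpow_natCast,
        ← Real.rpow_mul (by norm_num), ← Real.rpow_add (by norm_num)]
      congr 2
      push_cast
      ring

lemma kernel_rep {d : ℕ} {Ω : Set (Euc d)} {ρ : Euc d → ℝ}
    (hρ : IsMinkowskiGauge d Ω ρ) {lam : ℝ} (hlam : 0 < lam) {χ Φ Ψ : ℝ → ℝ}
    (hχ : ContDiff ℝ (⊤ : ℕ∞) χ) (hs : Function.support χ ⊆ Set.Ioo (1/2 : ℝ) 2)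
    (hΨ : ContDiff ℝ (⊤ : ℕ∞) Ψ) (hc : HasCompactSupport Ψ)
    (h0 : ∀ s, |s| ≤ 1 / 2 → Ψ s = 0) (k : ℕ) (x : Euc d) :
    invFTd (fun ξ => hfun χ Φ Ψ lam (k + 1) (ρ ξ)) x =
      ((((2 * Real.pi) ^ d)⁻¹ * (2 * Real.pi)⁻¹ * ((2 : ℝ) ^ k) ^ (-lam) : ℝ) : ℂ) *
      ∫ p : Euc d × ℝ, Complex.exp (Complex.I * (((2 : ℝ) ^ k) * phs ρ p +
        ((innerSL ℝ x).comp (ContinuousLinearMap.fst ℝ (Euc d) ℝ)) p : ℝ)) *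
          ((χ (ρ p.1) : ℂ) * mSym lam Ψ p.2) := by
  have hχρ := chi_rho_smooth hρ hχ hs
  have hχc : HasCompactSupport (fun ξ => χ (ρ ξ)) := by
    refine HasCompactSupport.intro (rho_compact hρ) fun ξ hξ => ?_
    by_contra h
    exact hξ (hs h).2.le
  have hms := mSym_smooth (lam := lam) Ψ hΨ h0
  have hmc : HasCompactSupport (mSym lam Ψ) := by
    have : HasCompactSupport (fun s => (Ψ s : ℂ)) :=
      hc.comp_left (g := fun x : ℝ => (x : ℂ)) (by simp)
    exact this.mul_right
  have hρc := rho_cont hρ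
  have hintg : Integrable (fun p : Euc d × ℝ => Complex.exp (Complex.I * (((2 : ℝ) ^ k) * phs ρ p +
        ((innerSL ℝ x).comp (ContinuousLinearMap.fst ℝ (Euc d) ℝ)) p : ℝ)) *
          ((χ (ρ p.1) : ℂ) * mSym lam Ψ p.2)) := by
    have hi1 : Integrable (fun ξ => (χ (ρ ξ) : ℂ)) :=
      (hχρ.continuous.integrable_of_hasCompactSupport hχc).ofReal
    have hi2 : Integrable (mSym lam Ψ) := hms.continuous.integrable_of_hasCompactSupport hmc
    have hi3 := Integrable.mul_prod hi1 hi2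
    refine Integrable.mono hi3 ?_ (ae_of_all _ fun p => ?_)
    · refine Continuous.aestronglyMeasurable ?_
      have e1 := hms.continuous
      have e2 := hχ.continuous
      have e3 : Continuous (phs ρ) := by unfold phs; fun_prop
      fun_prop
    · rw [norm_mul, mul_comm Complex.I, Complex.norm_exp_ofReal_mul_I, one_mul]
  rw [Measure.volume_eq_prod] at hintg ⊢
  rw [integral_prod _ hintg]
  simp only [invFTd]
  rw [Complex.real_smul, ← integral_const_mul, ← integral_const_mul]
  congr 1
  funext ξ
  simp only [hfun]
  rw [one_d_scaled hlam Ψ _ (by positivity), one_d_rep hlam Ψ hΨ hc h0]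
  rw [Complex.real_smul]
  set A := ∫ s : ℝ, mSym lam Ψ s * Complex.exp (Complex.I * (s * ((2:ℝ) ^ k * (1 - ρ ξ)) : ℝ))
    with hA
  have e : ∫ s : ℝ, Complex.exp (Complex.I * (((2 : ℝ) ^ k) * phs ρ (ξ, s) +
        ((innerSL ℝ x).comp (ContinuousLinearMap.fst ℝ (Euc d) ℝ)) (ξ, s) : ℝ)) *
          ((χ (ρ ξ) : ℂ) * mSym lam Ψ s) =
      Complex.exp (Complex.I * (⟪x, ξ⟫ : ℂ)) * (χ (ρ ξ) : ℂ) * A := by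
    rw [hA, ← integral_const_mul]
    congr 1
    funext s
    have e2 : Complex.exp (Complex.I * (((2 : ℝ) ^ k) * phs ρ (ξ, s) +
        ((innerSL ℝ x).comp (ContinuousLinearMap.fst ℝ (Euc d) ℝ)) (ξ, s) : ℝ)) =
        Complex.exp (Complex.I * (⟪x, ξ⟫ : ℂ)) *
        Complex.exp (Complex.I * (s * ((2:ℝ) ^ k * (1 - ρ ξ)) : ℝ)) := by
      rw [← Complex.exp_add]
      congr 1
      simp [phs]
      ring
    rw [e2]
    ring
  rw [e]
  push_cast
  ring

end Assembly

/-- The sup-norm bound `‖K_{λ,ℓ}‖_∞ ≲ 2^{-ℓ(λ + (d+1)/2)}` under the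
curvature assumption. -/
theorem kernel_sup_norm_bound
    (d : ℕ) (hd : 2 ≤ d) (Ω : Set (Euc d)) (ρ : Euc d → ℝ)
    (hρ : IsMinkowskiGauge d Ω ρ) (hcurv : HasNonvanishingCurvature d ρ)
    (lam : ℝ) (hlam : 0 < lam) (N0 : ℕ) (hN0 : d < N0)
    (χ Φ Ψ : ℝ → ℝ) (hH : HData lam N0 χ Φ Ψ) :
    ∃ C : ℝ, ∀ (ℓ : ℕ) (x : Euc d),
      ‖invFTd (fun ξ => hfun χ Φ Ψ lam ℓ (ρ ξ)) x‖ ≤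
        C * (2:ℝ) ^ (-(ℓ : ℝ) * (lam + ((d : ℝ) + 1) / 2)) := by
  
  obtain ⟨hχ, hs, hΦ, -, hΦ1, hΦ0, -, hΨe⟩ := hH
  have hΨ : ContDiff ℝ (⊤ : ℕ∞) Ψ := by
    rw [hΨe]
    exact (hΦ.comp (contDiff_id.div_const 2)).sub hΦ
  have h0 : ∀ s, |s| ≤ 1 / 2 → Ψ s = 0 := by
    intro s hs
    rw [hΨe]
    simp only
    rw [hΦ1 s hs, hΦ1 (s / 2) (by rw [abs_div, abs_two]; linarith [abs_nonneg s]), sub_self]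
  have h2 : ∀ s, 2 ≤ |s| → Ψ s = 0 := by
    intro s hs
    rw [hΨe]
    simp only
    rw [hΦ0 s (by linarith), hΦ0 (s / 2) (by rw [abs_div, abs_two]; linarith), sub_self]
  have hc : HasCompactSupport Ψ := by
    refine HasCompactSupport.intro (isCompact_Icc (a := (-2 : ℝ)) (b := 2)) fun s hs => ?_
    refine h2 s ?_
    by_contra h
    push Not at h
    exact hs (abs_le.1 h.le)
  have hms := mSym_smooth (lam := lam) Ψ hΨ h0
  obtain ⟨C, hC⟩ := geom_osc hd hρ hcurv hχ hs (mSym lam Ψ) hms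
    (fun s hs => by simp [mSym, h0 s hs]) (fun s hs => by simp [mSym, h2 s hs])
  set C0 : ℝ := ((2 * Real.pi) ^ d)⁻¹ * ∫ ξ, ‖hfun χ Φ Ψ lam 0 (ρ ξ)‖ with hC0
  set c : ℝ := ((2 * Real.pi) ^ d)⁻¹ * (2 * Real.pi)⁻¹ with hcdef
  have hcp : 0 < c := by positivity
  set C1 : ℝ := c * Real.sqrt C * (2 : ℝ) ^ (lam + ((d : ℝ) + 1) / 2) with hC1
  have hC1n : 0 ≤ C1 := by positivity
  have hC0n : 0 ≤ C0 := by
    have : 0 ≤ ∫ ξ, ‖hfun χ Φ Ψ lam 0 (ρ ξ)‖ := integral_nonneg fun _ => norm_nonneg _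
    positivity
  refine ⟨C0 + C1, fun ℓ x => ?_⟩
  cases ℓ with
  | zero =>
    have h1 : ‖invFTd (fun ξ => hfun χ Φ Ψ lam 0 (ρ ξ)) x‖ ≤ C0 := by
      simp only [invFTd]
      rw [norm_smul, Real.norm_of_nonneg (by positivity), hC0]
      refine mul_le_mul_of_nonneg_left ?_ (by positivity)
      refine (norm_integral_le_integral_norm _).trans (le_of_eq ?_)
      congr 1
      funext ξ
      rw [norm_mul, mul_comm Complex.I, Complex.norm_exp_ofReal_mul_I, mul_one]
    simp
    linarith
  | succ k =>
    rw [kernel_rep hρ hlam hχ hs hΨ hc h0 k x, norm_mul, Complex.norm_real,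
      Real.norm_of_nonneg (by positivity)]
    have h1 := hC ((2 : ℝ) ^ k) (by positivity)
      ((innerSL ℝ x).comp (ContinuousLinearMap.fst ℝ (Euc d) ℝ))
    have hfr : Module.finrank ℝ (Euc d × ℝ) = d + 1 := by simp
    rw [hfr] at h1
    have h3 := pow_bound (lam := lam) hcp.le (norm_nonneg _) h1
    refine h3.trans ?_
    rw [← hC1]
    have : 0 ≤ C0 * (2:ℝ) ^ (-((k + 1 : ℕ) : ℝ) * (lam + ((d : ℝ) + 1) / 2)) := by positivity
    linarith
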